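/- arXiv:1404.7764 — 2 statements merged into one kernel-verified Lean document; each statement's English description precedes it below -/
import Mathlib

section
/- There exist α₀ ≥ 1 and, for every α ≥ α₀, constants c > 0 and d₀ such that the following holds for all d ≥ d₀. Let G be a bipartite graph with parts X and Y and maximum degree at most d, let 𝒢 be a graph on α·d vertices, and set p⁻ = δ(𝒢)/(α·d). Let χ : Y → V(𝒢) be a random coloring in which each vertex of Y independently receives a uniformly random element of V(𝒢). Fix x ∈ X with d ≤ 2·d_G(x) and a color c₀ ∈ V(𝒢), and let W be the number of vertices y ∈ N_G(x) such that (i) y is the only vertex of N_G(x) with color χ(y), (ii) Bad(y, χ, G) ≤ d/√α, and (iii) c₀χ(y) ∈ E(𝒢). Then Pr( W ≤ p⁻·d_G(x)/2 ) ≤ exp(−c·δ(𝒢)). -/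
open SimpleGraph

def ContainsCopy {α β : Type*} (F : SimpleGraph α) (H : SimpleGraph β) : Prop :=
  ∃ f : F →g H, Function.Injective f

abbrev GraphFamily := Set (Σ n : ℕ, SimpleGraph (Fin n))

def FamFree {β : Type*} (H : SimpleGraph β) (𝓕 : GraphFamily) : Prop :=
  ∀ F ∈ 𝓕, ¬ ContainsCopy F.2 H

noncomputable def extremalNum (n : ℕ) (𝓕 : GraphFamily) : ℕ :=
  sSup {k | ∃ H : SimpleGraph (Fin n), FamFree H 𝓕 ∧ k = H.edgeSet.ncard}

def LocallyInjective {α β : Type*} {F : SimpleGraph α} {G : SimpleGraph β}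
    (φ : F →g G) : Prop :=
  ∀ v : α, Set.InjOn φ (F.neighborSet v)

def NoLocInjHom {α β : Type*} (F : SimpleGraph α) (G : SimpleGraph β) : Prop :=
  ¬ ∃ φ : F →g G, LocallyInjective φ

def ClosedFamily (𝓕 : GraphFamily) : Prop :=
  ∀ (W : Type) [Fintype W] (G : SimpleGraph W),
    (∀ F ∈ 𝓕, NoLocInjHom F.2 G) ↔ FamFree G 𝓕

noncomputable def deg {β : Type*} (H : SimpleGraph β) (v : β) : ℕ :=
  (H.neighborSet v).ncard

noncomputable def minDeg {β : Type*} [Fintype β] (H : SimpleGraph β) : ℕ :=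
  ⨅ v, deg H v

noncomputable def maxDeg {β : Type*} [Fintype β] (H : SimpleGraph β) : ℕ :=
  ⨆ v, deg H v

def RegularDeg {β : Type*} (G : SimpleGraph β) (d : ℕ) : Prop :=
  ∀ v, deg G v = d

noncomputable def Bad {α γ : Type*} (G : SimpleGraph α) (χ : α → γ) (v : α) : ℕ :=
  {u | u ∈ G.neighborSet v ∧ ∃ v', v' ∈ G.neighborSet u ∧ v' ≠ v ∧ χ v' = χ v}.ncard

open Classical in
/-- per-color factor for an expansion choice -/
noncomputable def psiF {V : Type} {N : ℕ} (A : Finset V) (c : Fin N) (o : Option (V × V))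
    (v : V) (j : Fin N) : ℝ :=
  match o with
  | none => if v ∈ A ∧ j = c then 1/2 else 1
  | some (y, z) => if (v = y ∨ v = z) ∧ j ≠ c then 0 else 1

open Classical in
noncomputable def rF {V : Type} (N : ℕ) (A : Finset V) (o : Option (V × V)) (v : V) : ℝ :=
  match o with
  | none => 1
  | some (y, z) => (if v ∈ A then Real.exp (1 / (2 * N)) else 1) *
      (if v = y ∨ v = z then 2 / (N : ℝ) else 1)

theorem psiF_nonneg {V : Type} {N : ℕ} (A : Finset V) (c : Fin N) (o : Option (V × V))
    (v : V) (j : Fin N) : 0 ≤ psiF A c o v j := by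
  unfold psiF; split <;> split_ifs <;> norm_num

theorem psiF_le_one {V : Type} {N : ℕ} (A : Finset V) (c : Fin N) (o : Option (V × V))
    (v : V) (j : Fin N) : psiF A c o v j ≤ 1 := by
  unfold psiF; split <;> split_ifs <;> norm_num

theorem rF_nonneg {V : Type} (N : ℕ) (A : Finset V) (o : Option (V × V)) (v : V) :
    0 ≤ rF N A o v := by
  unfold rF; split <;> (try split_ifs) <;> positivity

open Classical in
theorem vertex_bound {V : Type} {N : ℕ} (hN : 0 < N) (A : Finset V) (S : Finset (Fin N))
    (a : {c // c ∈ S} → Option (V × V)) (v : V) :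
    ∑ j : Fin N, ∏ c : {c // c ∈ S}, psiF A c.1 (a c) v j ≤
      N * (if v ∈ A then Real.exp (-(S.card : ℝ) / (2 * N)) else 1) * ∏ c, rF N A (a c) v := by
  have hN' : (0 : ℝ) < N := by exact_mod_cast hN
  have hle1 : ∀ j, ∏ c : {c // c ∈ S}, psiF A c.1 (a c) v j ≤ 1 := fun j =>
    Finset.prod_le_one (fun _ _ => psiF_nonneg ..) (fun _ _ => psiF_le_one ..)
  by_cases hm : ∃ c : {c // c ∈ S}, ∃ y z, a c = some (y, z) ∧ (v = y ∨ v = z)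
  · obtain ⟨c1, y, z, hc1, hv⟩ := hm
    have h0 : ∀ j, j ≠ c1.1 → ∏ c : {c // c ∈ S}, psiF A c.1 (a c) v j = 0 := by
      intro j hj
      apply Finset.prod_eq_zero (Finset.mem_univ c1)
      simp [psiF, hc1, hv, hj]
    rw [Finset.sum_eq_single c1.1 (fun j _ hj => h0 j hj) (by simp)]
    have hRn : 0 ≤ N * (if v ∈ A then Real.exp (-(S.card : ℝ) / (2 * N)) else 1) *
        ∏ c, rF N A (a c) v := by
      apply mul_nonneg
      · split_ifs <;> positivity
      · exact Finset.prod_nonneg (fun _ _ => rF_nonneg ..)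
    by_cases h2 : ∃ c2 : {c // c ∈ S}, c2 ≠ c1 ∧ ∃ y z, a c2 = some (y, z) ∧ (v = y ∨ v = z)
    · obtain ⟨c2, hne, y', z', hc2, hv'⟩ := h2
      rw [Finset.prod_eq_zero (Finset.mem_univ c2)]
      · exact hRn
      · have : c1.1 ≠ c2.1 := fun h => hne (Subtype.ext h.symm)
        simp [psiF, hc2, hv', this]
    · refine (hle1 _).trans ?_
      rw [← Finset.mul_prod_erase _ _ (Finset.mem_univ c1)]
      have hge : 1 ≤ ∏ c ∈ Finset.univ.erase c1, rF N A (a c) v := by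
        rw [← Finset.prod_const_one (s := Finset.univ.erase c1)]
        apply Finset.prod_le_prod
        · intros; norm_num
        · intro c hc
          have hcne := (Finset.mem_erase.1 hc).1
          rcases hac : a c with _ | ⟨y', z'⟩
          · simp [rF]
          · have : ¬ (v = y' ∨ v = z') := fun h => h2 ⟨c, hcne, y', z', hac, h⟩
            simp only [rF, this, if_false, mul_one]
            split_ifs
            · exact Real.one_le_exp (by positivity)
            · exact le_rfl
      have hr1 : 1 ≤ N * (if v ∈ A then Real.exp (-(S.card : ℝ) / (2 * N)) else 1) *
          rF N A (a c1) v := by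
        simp only [rF, hc1, hv, if_true]
        have hSN : (S.card : ℝ) ≤ N := by
          have := Finset.card_le_univ S
          simp at this; exact_mod_cast this
        split_ifs
        · have e1 : 1 / 2 ≤ Real.exp (-(S.card : ℝ) / (2 * N)) := by
            have := Real.add_one_le_exp (-(S.card : ℝ) / (2 * N))
            have h3 : -(1/2 : ℝ) ≤ -(S.card : ℝ) / (2 * N) := by
              rw [le_div_iff₀ (by positivity)]; linarith
            linarith
          have e2 : 1 ≤ Real.exp (1 / (2 * (N : ℝ))) := Real.one_le_exp (by positivity)
          have : (N : ℝ) * Real.exp (-(S.card : ℝ) / (2 * N)) *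
            (Real.exp (1 / (2 * (N : ℝ))) * (2 / N)) =
            2 * (Real.exp (-(S.card : ℝ) / (2 * N)) * Real.exp (1 / (2 * (N : ℝ)))) := by
            field_simp
          rw [this]
          nlinarith
        · field_simp; norm_num
      calc (1 : ℝ) ≤ _ := hr1
        _ ≤ _ := by
          rw [← mul_assoc]
          exact le_mul_of_one_le_right (by linarith) hge
  · have hno : ∀ c y z, a c = some (y, z) → ¬ (v = y ∨ v = z) :=
      fun c y z h h' => hm ⟨c, y, z, h, h'⟩
    by_cases hvA : v ∈ A
    · simp only [hvA, if_true]
      have hr : ∀ c, rF N A (a c) v = Real.exp ((if a c = none then 0 else 1) / (2 * N)) := by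
        intro c
        rcases hac : a c with _ | ⟨y', z'⟩
        · simp [rF]
        · simp [rF, hno c y' z' hac, hvA]
      simp_rw [hr]
      rw [← Real.exp_sum, mul_assoc, ← Real.exp_add]
      have hb : ∀ j, ∏ c : {c // c ∈ S}, psiF A c.1 (a c) v j ≤
          1 - ∑ c : {c // c ∈ S}, (if j = c.1 then (if a c = none then (1/2 : ℝ) else 0) else 0) := by
        intro j
        by_cases hj : ∃ c : {c // c ∈ S}, j = c.1 ∧ a c = none
        · obtain ⟨c, hjc, hac⟩ := hj
          rw [Finset.sum_eq_single c]
          · rw [← Finset.mul_prod_erase _ _ (Finset.mem_univ c)]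
            have h1 : psiF A c.1 (a c) v j = 1/2 := by simp [psiF, hac, hvA, hjc]
            have h2 : ∏ c ∈ Finset.univ.erase c, psiF A c.1 (a c) v j ≤ 1 :=
              Finset.prod_le_one (fun _ _ => psiF_nonneg ..) (fun _ _ => psiF_le_one ..)
            simp only [hjc, hac, if_true] at h1 h2 ⊢
            rw [h1]; linarith
          · intro c' _ hne
            have : j ≠ c'.1 := fun h => hne (Subtype.ext (h.symm.trans hjc))
            simp [this]
          · simp
        · rw [Finset.sum_eq_zero]
          · simpa using hle1 j
          · intro c _
            by_cases h1 : j = c.1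
            · have : a c ≠ none := fun h => hj ⟨c, h1, h⟩
              simp [this]
            · simp [h1]
      refine (Finset.sum_le_sum (fun j _ => hb j)).trans ?_
      rw [Finset.sum_sub_distrib, Finset.sum_comm]
      simp only [Finset.sum_ite_eq', Finset.mem_univ, if_true, Finset.sum_const, Finset.card_univ,
        Fintype.card_fin, nsmul_eq_mul, mul_one]
      set E := -(S.card : ℝ) / (2 * N) + ∑ c : {c // c ∈ S}, (if a c = none then (0:ℝ) else 1) / (2 * N) with hE
      have hEeq : N * E = - ∑ c : {c // c ∈ S}, (if a c = none then (1/2 : ℝ) else 0) := by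
        have : (S.card : ℝ) = ∑ c : {c // c ∈ S}, (1 : ℝ) := by simp
        rw [hE, this, ← Finset.sum_neg_distrib, Finset.sum_div, ← Finset.sum_add_distrib, Finset.mul_sum,
          ← Finset.sum_neg_distrib]
        apply Finset.sum_congr rfl
        intro c _
        split_ifs <;> field_simp <;> norm_num
      have := Real.add_one_le_exp E
      nlinarith
    · simp only [hvA, if_false, mul_one]
      have hr : ∀ c, rF N A (a c) v = 1 := by
        intro c
        rcases hac : a c with _ | ⟨y', z'⟩
        · simp [rF]
        · simp [rF, hno c y' z' hac, hvA]
      simp only [hr, Finset.prod_const_one, mul_one]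
      calc _ ≤ ∑ j : Fin N, (1:ℝ) := Finset.sum_le_sum (fun j _ => hle1 j)
        _ = _ := by simp

open Classical in
theorem prod_rF {V : Type} [Fintype V] {N : ℕ} (hN : 0 < N) (A : Finset V) (hA : A.card ≤ N)
    (y z : V) (hyz : y ≠ z) : ∏ v, rF N A (some (y, z)) v ≤ 8 / (N : ℝ) ^ 2 := by
  have hN' : (0 : ℝ) < N := by exact_mod_cast hN
  simp only [rF]
  rw [Finset.prod_mul_distrib, Finset.prod_ite, Finset.prod_ite]
  simp only [Finset.prod_const, one_pow, mul_one]
  have h1 : (Finset.univ.filter (fun v => v ∈ A)) = A := by ext; simp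
  have h2 : (Finset.univ.filter (fun v => v = y ∨ v = z)) = {y, z} := by ext; simp
  rw [h1, h2, Finset.card_pair hyz, ← Real.exp_nat_mul]
  have hA' : (A.card : ℝ) ≤ N := by exact_mod_cast hA
  have h3 : Real.exp (A.card * (1 / (2 * (N:ℝ)))) ≤ 2 := by
    calc _ ≤ Real.exp (1/2) := by
          apply Real.exp_le_exp.2
          rw [mul_one_div, div_le_div_iff₀ (by positivity) (by norm_num)]; linarith
      _ ≤ 2 := by
          have := Real.exp_one_lt_d9
          have h4 : Real.exp (1/2) * Real.exp (1/2) = Real.exp 1 := by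
            rw [← Real.exp_add]; norm_num
          nlinarith [Real.exp_pos (1/2)]
  calc _ ≤ 2 * (2 / (N:ℝ))^2 := by gcongr
    _ = _ := by ring

open Classical in
theorem mgf_bound {V : Type} [Fintype V] {N : ℕ} (hN : 0 < N) (A : Finset V) (hA : A.card ≤ N)
    (S : Finset (Fin N)) (q : V → V → ℝ) (hq : ∀ y z, 0 ≤ q y z) (hqq : ∀ y, q y y = 0) :
    ∑ f : V → Fin N, ∏ c ∈ S, ((1/2 : ℝ) ^ (A.filter (fun v => f v = c)).card +
      1/2 * ∑ p : V × V, q p.1 p.2 * (if f p.1 = c ∧ f p.2 = c then 1 else 0)) ≤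
    (N : ℝ) ^ (Fintype.card V) * Real.exp (-(S.card : ℝ) / (2 * N) * A.card) *
      (1 + 4 / (N:ℝ)^2 * ∑ p : V × V, q p.1 p.2) ^ S.card := by
  let K : Option (V × V) → ℝ := fun o => match o with
    | none => 1
    | some p => 1/2 * q p.1 p.2
  let Gf : Option (V × V) → ℝ := fun o => match o with
    | none => 1
    | some p => 4 / (N:ℝ)^2 * q p.1 p.2
  have hK : ∀ o, 0 ≤ K o := by
    intro o; rcases o with _ | p
    · simp [K]
    · have := hq p.1 p.2; simp only [K]; positivity
  have hterm : ∀ (f : V → Fin N) (c : Fin N),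
      ((1/2 : ℝ) ^ (A.filter (fun v => f v = c)).card +
      1/2 * ∑ p : V × V, q p.1 p.2 * (if f p.1 = c ∧ f p.2 = c then 1 else 0)) =
      ∑ o : Option (V × V), K o * ∏ v, psiF A c o v (f v) := by
    intro f c
    rw [Fintype.sum_option, Finset.mul_sum]
    congr 1
    · simp only [K, psiF, one_mul]
      rw [Finset.prod_ite]
      simp only [Finset.prod_const, one_pow, mul_one]
      congr 2; ext v; simp
    · apply Finset.sum_congr rfl
      rintro ⟨y, z⟩ _
      simp only [K, mul_assoc]
      congr 2
      simp only [psiF]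
      split_ifs with h
      · symm; apply Finset.prod_eq_one
        intro v _
        rw [if_neg]
        rintro ⟨h1 | h1, h2⟩
        · subst h1; exact h2 h.1
        · subst h1; exact h2 h.2
      · symm
        by_cases h1 : f y = c
        · have h2 : f z ≠ c := fun h2 => h ⟨h1, h2⟩
          exact Finset.prod_eq_zero (Finset.mem_univ z) (by simp [h2])
        · exact Finset.prod_eq_zero (Finset.mem_univ y) (by simp [h1])
  have hexp : ∀ f : V → Fin N, ∏ c ∈ S, ((1/2 : ℝ) ^ (A.filter (fun v => f v = c)).card +
      1/2 * ∑ p : V × V, q p.1 p.2 * (if f p.1 = c ∧ f p.2 = c then 1 else 0)) =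
      ∑ a : {c // c ∈ S} → Option (V × V), (∏ c, K (a c)) *
        ∏ v, ∏ c : {c // c ∈ S}, psiF A c.1 (a c) v (f v) := by
    intro f
    rw [← Finset.prod_coe_sort]
    simp_rw [hterm]
    rw [Finset.prod_univ_sum, Fintype.piFinset_univ]
    apply Finset.sum_congr rfl
    intro a _
    rw [Finset.prod_mul_distrib, Finset.prod_comm]
  simp_rw [hexp]
  rw [Finset.sum_comm]
  have hbound : ∀ a : {c // c ∈ S} → Option (V × V),
      ∑ f : V → Fin N, (∏ c, K (a c)) * ∏ v, ∏ c : {c // c ∈ S}, psiF A c.1 (a c) v (f v) ≤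
      (N : ℝ) ^ (Fintype.card V) * Real.exp (-(S.card : ℝ) / (2 * N) * A.card) *
        ∏ c, Gf (a c) := by
    intro a
    rw [← Finset.mul_sum]
    have h1 : ∑ f : V → Fin N, ∏ v, ∏ c : {c // c ∈ S}, psiF A c.1 (a c) v (f v) =
        ∏ v, ∑ j : Fin N, ∏ c : {c // c ∈ S}, psiF A c.1 (a c) v j := by
      rw [Finset.prod_univ_sum, Fintype.piFinset_univ]
    rw [h1]
    have h2 : ∏ v, ∑ j : Fin N, ∏ c : {c // c ∈ S}, psiF A c.1 (a c) v j ≤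
        ∏ v, (N * (if v ∈ A then Real.exp (-(S.card : ℝ) / (2 * N)) else 1) *
          ∏ c, rF N A (a c) v) := by
      apply Finset.prod_le_prod
      · intro v _
        exact Finset.sum_nonneg (fun j _ => Finset.prod_nonneg (fun _ _ => psiF_nonneg ..))
      · intro v _; exact vertex_bound hN A S a v
    have h3 : ∏ v, (N * (if v ∈ A then Real.exp (-(S.card : ℝ) / (2 * N)) else 1) *
          ∏ c, rF N A (a c) v) = (N : ℝ) ^ (Fintype.card V) *
          Real.exp (-(S.card : ℝ) / (2 * N) * A.card) * ∏ c, ∏ v, rF N A (a c) v := by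
      rw [Finset.prod_mul_distrib, Finset.prod_mul_distrib, Finset.prod_comm (f := fun v c => rF N A (a c) v)]
      congr 2
      · simp
      · rw [Finset.prod_ite]
        simp only [Finset.prod_const, one_pow, mul_one]
        rw [mul_comm _ (A.card : ℝ), Real.exp_nat_mul]
        congr 2; ext v; simp
    calc _ ≤ (∏ c, K (a c)) * _ :=
          mul_le_mul_of_nonneg_left (h2.trans_eq h3) (Finset.prod_nonneg (fun _ _ => hK _))
      _ = (N : ℝ) ^ (Fintype.card V) * Real.exp (-(S.card : ℝ) / (2 * N) * A.card) *
          ∏ c, (K (a c) * ∏ v, rF N A (a c) v) := by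
          rw [Finset.prod_mul_distrib]; ring
      _ ≤ _ := by
          apply mul_le_mul_of_nonneg_left _ (by positivity)
          apply Finset.prod_le_prod
          · intro c _
            exact mul_nonneg (hK _) (Finset.prod_nonneg (fun _ _ => rF_nonneg ..))
          · intro c _
            rcases a c with _ | ⟨y, z⟩
            · simp [K, Gf, rF]
            · simp only [K, Gf]
              by_cases hyz : y = z
              · subst hyz; simp [hqq]
              · calc _ ≤ 1/2 * q y z * (8 / (N:ℝ)^2) := by
                      apply mul_le_mul_of_nonneg_left (prod_rF hN A hA y z hyz)
                      have := hq y z; positivity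
                  _ = _ := by ring
  refine (Finset.sum_le_sum (fun a _ => hbound a)).trans_eq ?_
  rw [← Finset.mul_sum]
  congr 1
  have h4 : ∑ a : {c // c ∈ S} → Option (V × V), ∏ c, Gf (a c) =
      ∏ c : {c // c ∈ S}, ∑ o, Gf o := by
    rw [Finset.prod_univ_sum, Fintype.piFinset_univ]
  rw [h4, Fintype.sum_option]
  simp [Gf, Finset.mul_sum]

open Classical in
noncomputable def wF {V : Type} [Fintype V] (G : SimpleGraph V) (y z : V) : ℕ :=
  (Finset.univ.filter (fun u => G.Adj y u ∧ G.Adj u z)).card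

open Classical in
noncomputable def qF {V : Type} [Fintype V] (G : SimpleGraph V) (A : Finset V) (t : ℝ) (y z : V) : ℝ :=
  if y ∈ A ∧ z ≠ y then (if z ∈ A then 1 else 0) + (wF G y z : ℝ) / t else 0

theorem qF_nonneg {V : Type} [Fintype V] (G : SimpleGraph V) (A : Finset V) (t : ℝ) (ht : 0 < t)
    (y z : V) : 0 ≤ qF G A t y z := by
  unfold qF; split_ifs <;> positivity

open Classical in
theorem deg_eq {V : Type} [Fintype V] (G : SimpleGraph V) (v : V) :
    deg G v = (Finset.univ.filter (fun u => G.Adj v u)).card := by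
  unfold deg
  rw [← Set.ncard_coe_finset]
  congr 1; ext u; simp

open Classical in
theorem sum_wF {V : Type} [Fintype V] (G : SimpleGraph V) (d : ℕ) (hd : ∀ v, deg G v ≤ d) (y : V) :
    ∑ z, wF G y z ≤ d * d := by
  have : ∑ z, wF G y z = ∑ u ∈ Finset.univ.filter (fun u => G.Adj y u), deg G u := by
    simp only [wF, deg_eq, Finset.card_filter]
    rw [Finset.sum_comm, Finset.sum_filter]
    apply Finset.sum_congr rfl
    intro u _
    by_cases h : G.Adj y u <;> simp [h]
  rw [this]
  calc _ ≤ ∑ u ∈ Finset.univ.filter (fun u => G.Adj y u), d := Finset.sum_le_sum (fun u _ => hd u)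
    _ = deg G y * d := by rw [Finset.sum_const, deg_eq, smul_eq_mul]
    _ ≤ _ := Nat.mul_le_mul_right _ (hd y)

open Classical in
theorem sum_qF {V : Type} [Fintype V] (G : SimpleGraph V) (A : Finset V) (t : ℝ) (ht : 0 < t)
    (d : ℕ) (hd : ∀ v, deg G v ≤ d) (hA : A.card ≤ d) :
    ∑ p : V × V, qF G A t p.1 p.2 ≤ A.card * (d + d * d / t) := by
  rw [Fintype.sum_prod_type]
  have h : ∀ y, ∑ z, qF G A t y z ≤ if y ∈ A then (d + d * d / t : ℝ) else 0 := by
    intro y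
    split_ifs with hy
    · calc _ ≤ ∑ z, ((if z ∈ A then (1:ℝ) else 0) + (wF G y z : ℝ) / t) := by
            apply Finset.sum_le_sum
            intro z _
            unfold qF
            split_ifs <;> first | exact le_rfl | positivity
        _ = A.card + ((∑ z, wF G y z : ℕ) : ℝ) / t := by
            rw [Finset.sum_add_distrib, ← Finset.sum_div]; simp
        _ ≤ _ := by
            have h1 : (A.card : ℝ) ≤ d := by exact_mod_cast hA
            have h2 : ((∑ z, wF G y z : ℕ) : ℝ) ≤ d * d := by exact_mod_cast sum_wF G d hd y
            gcongr
    · apply le_of_eq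
      apply Finset.sum_eq_zero
      intro z _; simp [qF, hy]
  refine (Finset.sum_le_sum (fun y _ => h y)).trans_eq ?_
  rw [← Finset.sum_filter, Finset.sum_const, nsmul_eq_mul]
  congr 3; ext v; simp

open Classical in
theorem bad_le {V : Type} [Fintype V] {N : ℕ} (G : SimpleGraph V) (f : V → Fin N) (y : V) :
    Bad G f y ≤ ∑ z ∈ Finset.univ.filter (fun z => z ≠ y ∧ f z = f y), wF G y z := by
  unfold Bad wF
  refine le_trans ?_ Finset.card_biUnion_le
  rw [← Set.ncard_coe_finset]
  apply Set.ncard_le_ncard _ (Set.toFinite _)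
  rintro u ⟨hu, v', hv', hne, hc⟩
  simp only [Finset.coe_biUnion, Set.mem_iUnion, Finset.coe_filter, Finset.mem_univ, true_and,
    Set.mem_ofPred_eq]
  exact ⟨v', ⟨hne, hc⟩, hu, hv'⟩

open Classical in
theorem color_bound {V : Type} [Fintype V] {N : ℕ} (G : SimpleGraph V) (A : Finset V)
    (t : ℝ) (ht : 0 < t) (f : V → Fin N) (c : Fin N) (Wc : ℕ)
    (hW : ∀ y ∈ A, f y = c → (∀ y' ∈ A, f y' = f y → y' = y) → (Bad G f y : ℝ) ≤ t → 1 ≤ Wc) :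
    (1/2 : ℝ) ^ Wc ≤ (1/2 : ℝ) ^ (A.filter (fun v => f v = c)).card +
      1/2 * ∑ p : V × V, qF G A t p.1 p.2 * (if f p.1 = c ∧ f p.2 = c then 1 else 0) := by
  set C := A.filter (fun v => f v = c) with hC
  have hterm : ∀ p : V × V, 0 ≤ qF G A t p.1 p.2 * (if f p.1 = c ∧ f p.2 = c then (1:ℝ) else 0) := by
    intro p
    apply mul_nonneg (qF_nonneg G A t ht _ _)
    split_ifs <;> norm_num
  have hQ0 : 0 ≤ ∑ p : V × V, qF G A t p.1 p.2 * (if f p.1 = c ∧ f p.2 = c then (1:ℝ) else 0) :=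
    Finset.sum_nonneg (fun p _ => hterm p)
  have hWle : (1/2 : ℝ) ^ Wc ≤ 1 := pow_le_one₀ (by norm_num) (by norm_num)
  rcases Nat.lt_trichotomy C.card 1 with h | h | h
  · have : C.card = 0 := by omega
    rw [this]; simp only [pow_zero]; linarith
  · obtain ⟨y, hy⟩ := Finset.card_eq_one.1 h
    have hyC : y ∈ C := by rw [hy]; simp
    have hyA : y ∈ A := (Finset.mem_filter.1 hyC).1
    have hfy : f y = c := (Finset.mem_filter.1 hyC).2
    have huniq : ∀ y' ∈ A, f y' = f y → y' = y := by
      intro y' h1 h2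
      have : y' ∈ C := Finset.mem_filter.2 ⟨h1, h2.trans hfy⟩
      rw [hy] at this; simpa using this
    rw [h]
    by_cases hb : (Bad G f y : ℝ) ≤ t
    · have h1 := hW y hyA hfy huniq hb
      have : (1/2 : ℝ) ^ Wc ≤ (1/2 : ℝ)^1 := pow_le_pow_of_le_one (by norm_num) (by norm_num) h1
      linarith
    · push Not at hb
      have hQ : 1 ≤ ∑ p : V × V, qF G A t p.1 p.2 * (if f p.1 = c ∧ f p.2 = c then (1:ℝ) else 0) := by
        rw [Fintype.sum_prod_type]
        calc (1:ℝ) ≤ (Bad G f y : ℝ) / t := by rw [le_div_iff₀ ht]; linarith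
          _ ≤ ((∑ z ∈ Finset.univ.filter (fun z => z ≠ y ∧ f z = f y), wF G y z : ℕ) : ℝ) / t := by
              have := bad_le G f y
              gcongr
          _ = ∑ z ∈ Finset.univ.filter (fun z => z ≠ y ∧ f z = f y), (wF G y z : ℝ) / t := by
              rw [Nat.cast_sum, Finset.sum_div]
          _ ≤ ∑ z, qF G A t y z * (if f y = c ∧ f z = c then (1:ℝ) else 0) := by
              rw [Finset.sum_filter]
              apply Finset.sum_le_sum
              intro z _
              split_ifs with h1 h2 h2
              · simp only [qF, hyA, h1.1, ne_eq, not_false_eq_true, and_self, if_true, mul_one]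
                split_ifs <;> linarith
              · exact absurd ⟨hfy, h1.2.trans hfy⟩ h2
              · simpa using qF_nonneg G A t ht y z
              · simp
          _ ≤ _ := Finset.single_le_sum (f := fun y => ∑ z, qF G A t y z * (if f y = c ∧ f z = c then (1:ℝ) else 0))
              (fun y _ => Finset.sum_nonneg (fun z _ => hterm (y, z))) (Finset.mem_univ y)
      linarith
  · obtain ⟨y, hy, z, hz, hyz⟩ := Finset.one_lt_card.1 h
    have hone : ∀ y ∈ C, ∀ z ∈ C, y ≠ z →
        1 ≤ qF G A t y z * (if f y = c ∧ f z = c then (1:ℝ) else 0) := by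
      intro y hy z hz hyz
      rw [hC, Finset.mem_filter] at hy hz
      simp only [qF, hy.1, hy.2, hz.1, hz.2, hyz.symm, ne_eq, not_false_eq_true, and_self, if_true, mul_one]
      have : 0 ≤ (wF G y z : ℝ) / t := by positivity
      linarith
    have h2 : 2 ≤ ∑ p : V × V, qF G A t p.1 p.2 * (if f p.1 = c ∧ f p.2 = c then (1:ℝ) else 0) := by
      have hne : ((y, z) : V × V) ≠ (z, y) := by
        intro h; exact hyz (congrArg Prod.fst h)
      calc (2:ℝ) ≤ ∑ p ∈ ({(y, z), (z, y)} : Finset (V × V)),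
              qF G A t p.1 p.2 * (if f p.1 = c ∧ f p.2 = c then (1:ℝ) else 0) := by
            rw [Finset.sum_pair hne]
            have := hone y hy z hz hyz
            have := hone z hz y hy hyz.symm
            simp only at *
            linarith
        _ ≤ _ := Finset.sum_le_sum_of_subset_of_nonneg (Finset.subset_univ _) (fun p _ _ => hterm p)
    have : (0:ℝ) ≤ (1/2 : ℝ) ^ C.card := by positivity
    linarith

open Classical in
theorem pointwise_bound {V : Type} [Fintype V] {N : ℕ} (G : SimpleGraph V) (x : V)
    (t : ℝ) (ht : 0 < t) (f : V → Fin N) (𝒢 : SimpleGraph (Fin N)) (c₀ : Fin N) :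
    (1/2 : ℝ) ^ (Set.ncard {y | y ∈ G.neighborSet x ∧
                        (∀ y' ∈ G.neighborSet x, f y' = f y → y' = y) ∧
                        (Bad G f y : ℝ) ≤ t ∧ 𝒢.Adj c₀ (f y)}) ≤
    ∏ c ∈ Finset.univ.filter (fun c => 𝒢.Adj c₀ c),
      ((1/2 : ℝ) ^ ((Finset.univ.filter (fun u => G.Adj x u)).filter (fun v => f v = c)).card +
      1/2 * ∑ p : V × V, qF G (Finset.univ.filter (fun u => G.Adj x u)) t p.1 p.2 *
        (if f p.1 = c ∧ f p.2 = c then 1 else 0)) := by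
  set Ws := {y | y ∈ G.neighborSet x ∧
                        (∀ y' ∈ G.neighborSet x, f y' = f y → y' = y) ∧
                        (Bad G f y : ℝ) ≤ t ∧ 𝒢.Adj c₀ (f y)} with hWs
  rw [Set.ncard_eq_toFinset_card', Finset.card_eq_sum_card_fiberwise (f := f)
    (t := Finset.univ.filter (fun c => 𝒢.Adj c₀ c)), ← Finset.prod_pow_eq_pow_sum]
  · apply Finset.prod_le_prod
    · intros; positivity
    · intro c hc
      apply color_bound G _ t ht
      intro y hy hfy hun hb
      rw [Nat.one_le_iff_ne_zero, ← Nat.pos_iff_ne_zero, Finset.card_pos]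
      refine ⟨y, ?_⟩
      simp only [Finset.mem_filter, Finset.mem_univ, true_and, Set.mem_toFinset, hWs,
        Set.mem_ofPred_eq, SimpleGraph.mem_neighborSet] at hy hc hun ⊢
      exact ⟨⟨hy, hun, hb, hfy ▸ hc⟩, hfy⟩
  · intro y hy
    simp only [Set.coe_toFinset, hWs, Set.mem_ofPred_eq] at hy
    simp [hy.2.2.2]

theorem final_num (α d D s δ : ℕ) (hα : 40000 ≤ α) (hd : 1 ≤ d) (hδ : δ ≤ s) (hD : d ≤ 2 * D)
    (Q : ℝ) (hQ0 : 0 ≤ Q)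
    (hQ : Q ≤ D * (d + d * d / ((d:ℝ) / Real.sqrt α))) :
    (2:ℝ) ^ ((δ : ℝ) / ((α : ℝ) * (d : ℝ)) * (D : ℝ) / 2) *
      (Real.exp (-(s : ℝ) / (2 * ((α * d : ℕ) : ℝ)) * D) * (1 + 4 / ((α * d : ℕ):ℝ)^2 * Q) ^ s) ≤
    Real.exp (-(1 / (20 * (α : ℝ))) * δ) := by
  have hα' : (40000:ℝ) ≤ α := by exact_mod_cast hα
  have hd' : (1:ℝ) ≤ d := by exact_mod_cast hd
  have hδ' : (δ:ℝ) ≤ s := by exact_mod_cast hδ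
  have hD' : (d:ℝ) ≤ 2 * D := by exact_mod_cast hD
  have hα0 : (0:ℝ) < α := by linarith
  have hd0 : (0:ℝ) < d := by linarith
  have hD0 : (0:ℝ) < D := by linarith
  push_cast
  set r := Real.sqrt α with hr
  have hr2 : r * r = α := Real.mul_self_sqrt hα0.le
  have hr200 : 200 ≤ r := Real.le_sqrt_of_sq_le (by norm_num1; exact hα')
  have hQ' : Q ≤ D * d * (1 + r) := by
    have : (D:ℝ) * (d + d * d / ((d:ℝ) / r)) = D * d * (1 + r) := by field_simp
    linarith
  set μ : ℝ := s * D / (α * d) with hμ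
  have hμ0 : 0 ≤ μ := by positivity
  have e1 : (2:ℝ) ^ ((δ : ℝ) / ((α : ℝ) * (d : ℝ)) * (D : ℝ) / 2) ≤ Real.exp (0.35 * μ) := by
    rw [Real.rpow_def_of_pos (by norm_num)]
    apply Real.exp_le_exp.2
    have h1 : (δ : ℝ) / ((α : ℝ) * (d : ℝ)) * (D : ℝ) / 2 ≤ μ / 2 := by
      rw [hμ, div_mul_eq_mul_div]; gcongr
    have h2 := Real.log_two_lt_d9
    have h3 : 0 ≤ (δ : ℝ) / ((α : ℝ) * (d : ℝ)) * (D : ℝ) / 2 := by positivity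
    nlinarith
  have e2 : -(s : ℝ) / (2 * (α * d : ℝ)) * D = -μ / 2 := by
    rw [hμ]; field_simp
  have e3 : (1 + 4 / (α * d : ℝ)^2 * Q) ^ s ≤ Real.exp (0.05 * μ) := by
    have h1 : 1 + 4 / (α * d : ℝ)^2 * Q ≤ Real.exp (4 / (α * d : ℝ)^2 * Q) := by
      have := Real.add_one_le_exp (4 / (α * d : ℝ)^2 * Q); linarith
    calc _ ≤ (Real.exp (4 / (α * d : ℝ)^2 * Q)) ^ s := by
          apply pow_le_pow_left₀ _ h1; positivity
      _ = Real.exp (s * (4 / (α * d : ℝ)^2 * Q)) := by rw [Real.exp_nat_mul]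
      _ ≤ _ := by
          apply Real.exp_le_exp.2
          calc _ ≤ (s:ℝ) * (4 / (α * d : ℝ)^2 * (D * d * (1 + r))) := by gcongr
            _ = μ * (4 * (1 + r) / α) := by rw [hμ]; field_simp
            _ ≤ μ * 0.05 := by
                apply mul_le_mul_of_nonneg_left _ hμ0
                rw [div_le_iff₀ hα0]; nlinarith
            _ = _ := by ring
  rw [e2]
  calc _ ≤ Real.exp (0.35 * μ) * (Real.exp (-μ / 2) * Real.exp (0.05 * μ)) := by gcongr
    _ = Real.exp (-0.1 * μ) := by
        rw [← Real.exp_add, ← Real.exp_add]; congr 1; ring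
    _ ≤ _ := by
        apply Real.exp_le_exp.2
        have : (δ:ℝ) / (2 * α) ≤ μ := by
          rw [hμ, div_le_div_iff₀ (by positivity) (by positivity)]
          have : (δ:ℝ) * d ≤ s * (2 * D) := by gcongr
          nlinarith
        have h5 : -(1 / (20 * (α : ℝ))) * δ = -0.1 * (δ / (2 * α)) := by field_simp; ring
        rw [h5]; linarith

theorem statement2 :
    ∃ α₀ : ℕ, 1 ≤ α₀ ∧
      ∀ α : ℕ, α₀ ≤ α →
        ∃ (c : ℝ) (d₀ : ℕ), 0 < c ∧
          ∀ d : ℕ, d₀ ≤ d →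
            ∀ (V : Type) [Fintype V] (G : SimpleGraph V) (X Y : Set V),
              Disjoint X Y → X ∪ Y = Set.univ →
              (∀ u v : V, G.Adj u v → (u ∈ X ∧ v ∈ Y) ∨ (u ∈ Y ∧ v ∈ X)) →
              (∀ v : V, deg G v ≤ d) →
              ∀ (𝒢 : SimpleGraph (Fin (α * d))) (x : V) (c₀ : Fin (α * d)),
                x ∈ X → d ≤ 2 * deg G x →
                (Set.ncard {f : V → Fin (α * d) |
                    (Set.ncard {y | y ∈ G.neighborSet x ∧
                        (∀ y' ∈ G.neighborSet x, f y' = f y → y' = y) ∧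
                        (Bad G f y : ℝ) ≤ (d : ℝ) / Real.sqrt (α : ℝ) ∧
                        𝒢.Adj c₀ (f y)} : ℝ) ≤
                      (minDeg 𝒢 : ℝ) / ((α : ℝ) * (d : ℝ)) * (deg G x : ℝ) / 2} : ℝ) /
                  (Nat.card (V → Fin (α * d)) : ℝ) ≤
                Real.exp (-c * (minDeg 𝒢 : ℝ)) := by
  classical
  refine ⟨40000, by norm_num, fun α hα => ⟨1 / (20 * (α : ℝ)), 1, ?_, ?_⟩⟩
  · have : (0:ℝ) < α := by exact_mod_cast (by omega : 0 < α)
    positivity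
  intro d hd V _ G X Y _ _ _ hdeg 𝒢 x c₀ _ hdx
  have hα0 : (0:ℝ) < α := by exact_mod_cast (by omega : 0 < α)
  have hd0 : (0:ℝ) < d := by exact_mod_cast (by omega : 0 < d)
  have ht : 0 < (d : ℝ) / Real.sqrt (α : ℝ) := by positivity
  have hN : 0 < α * d := Nat.mul_pos (by omega) (by omega)
  have hN' : (0:ℝ) < ((α * d : ℕ) : ℝ) := by exact_mod_cast hN
  set t := (d : ℝ) / Real.sqrt (α : ℝ) with htdef
  set A := Finset.univ.filter (fun u => G.Adj x u) with hA
  set S := Finset.univ.filter (fun c => 𝒢.Adj c₀ c) with hS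
  have hDA : deg G x = A.card := deg_eq G x
  have hAd : A.card ≤ d := hDA ▸ hdeg x
  have hAN : A.card ≤ α * d := hAd.trans (Nat.le_mul_of_pos_left d (by omega))
  have hδ : minDeg 𝒢 ≤ S.card := by
    rw [hS, ← deg_eq]
    exact ciInf_le (OrderBot.bddBelow _) c₀
  rw [hDA] at hdx ⊢
  set m : ℝ := (minDeg 𝒢 : ℝ) / ((α : ℝ) * (d : ℝ)) * (A.card : ℝ) / 2 with hm
  have hmgf := mgf_bound hN A hAN S (qF G A t) (qF_nonneg G A t ht) (by intro y; simp [qF])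
  have hfin := final_num α d A.card S.card (minDeg 𝒢) hα hd hδ hdx
    (∑ p : V × V, qF G A t p.1 p.2) (Finset.sum_nonneg (fun p _ => qF_nonneg G A t ht _ _))
    (sum_qF G A t ht d hdeg hAd)
  refine le_trans ?_ hfin
  have hcard : (Nat.card (V → Fin (α * d)) : ℝ) = ((α * d : ℕ) : ℝ) ^ (Fintype.card V) := by
    simp
  rw [hcard, div_le_iff₀ (by positivity), Set.ncard_eq_toFinset_card', Finset.card_eq_sum_ones,
    Nat.cast_sum, Set.toFinset_setOf]
  calc _ ≤ ∑ f : V → Fin (α * d), (2:ℝ) ^ m * ∏ c ∈ S,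
        ((1/2 : ℝ) ^ (A.filter (fun v => f v = c)).card +
        1/2 * ∑ p : V × V, qF G A t p.1 p.2 * (if f p.1 = c ∧ f p.2 = c then 1 else 0)) := by
        rw [Finset.sum_filter]
        apply Finset.sum_le_sum
        intro f _
        have hp := pointwise_bound G x t ht f 𝒢 c₀
        have h2 : (0:ℝ) ≤ (2:ℝ) ^ m := by positivity
        refine le_trans ?_ (mul_le_mul_of_nonneg_left hp h2)
        split_ifs with h
        · have h3 := Real.rpow_le_rpow_of_exponent_le (one_le_two (α := ℝ)) h
          rw [Real.rpow_natCast] at h3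
          rw [one_div, inv_pow, Nat.cast_one, ← div_eq_mul_inv, one_le_div (by positivity)]
          exact h3
        · positivity
    _ = (2:ℝ) ^ m * _ := by rw [← Finset.mul_sum]
    _ ≤ _ := mul_le_mul_of_nonneg_left hmgf (by positivity)
    _ = _ := by ring
end

section
/- Fix ε > 0. There exist α₀ ≥ 1 and, for every α ≥ α₀, an integer d₀ such that the following holds for all d ≥ d₀. Let G be a d-regular bipartite graph with parts A and B and let 𝒢 be a graph on α·d vertices with minimum degree δ(𝒢) > d^ε. Then there exist a coloring χ : A → V(𝒢) and a spanning subgraph H ⊆ G such that: (P1) every a ∈ A satisfies d_H(a) ≥ d/2; (P2) for every b ∈ B, the restriction of χ to N_H(b) is injective (the neighborhood of b is rainbow); and (P3) for every b ∈ B and every c ∈ V(𝒢), there are at least δ(𝒢)/(2α) vertices a ∈ N_H(b) with χ(a)c ∈ E(𝒢). -/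
open SimpleGraph

section helpers
open Finset Classical

theorem lll_core {Ω I : Type*} [Fintype Ω] (Bd : I → Ω → Prop)
    (nb : I → Finset I) (p : ℝ) (Δ : ℕ) (hp0 : 0 ≤ p)
    (hΔ : ∀ i, (nb i).card ≤ Δ) (hp : 4 * p * Δ ≤ 1)
    (hind : ∀ i (S : Finset I), (∀ j ∈ S, j ∉ nb i) →
      ((univ.filter (fun ω => Bd i ω ∧ ∀ j ∈ S, ¬ Bd j ω)).card : ℝ) ≤
        p * (univ.filter (fun ω => ∀ j ∈ S, ¬ Bd j ω)).card) :
    ∀ (n : ℕ) (S : Finset I), S.card = n → ∀ i,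
      ((univ.filter (fun ω => Bd i ω ∧ ∀ j ∈ S, ¬ Bd j ω)).card : ℝ) ≤
        2 * p * (univ.filter (fun ω => ∀ j ∈ S, ¬ Bd j ω)).card := by
  intro n
  induction n using Nat.strong_induction_on with
  | _ n ih =>
  intro S hS i
  by_cases h1 : S ∩ nb i = ∅
  · have := hind i S (fun j hj hj' => by
      have : j ∈ S ∩ nb i := mem_inter.2 ⟨hj, hj'⟩
      simp [h1] at this)
    have h2 : (0:ℝ) ≤ p * (univ.filter (fun ω => ∀ j ∈ S, ¬ Bd j ω)).card := by positivity
    linarith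
  · have hlt : (S \ nb i).card < n := by
      rw [← hS]
      apply card_lt_card
      rw [ssubset_iff_subset_ne]
      refine ⟨sdiff_subset, fun h => h1 ?_⟩
      rw [Finset.sdiff_eq_self_iff_disjoint] at h
      exact disjoint_iff_inter_eq_empty.1 h
    have hA := hind i (S \ nb i) (fun j hj => (mem_sdiff.1 hj).2)
    have hB : ((univ.filter (fun ω => Bd i ω ∧ ∀ j ∈ S, ¬ Bd j ω)).card : ℝ) ≤
        ((univ.filter (fun ω => Bd i ω ∧ ∀ j ∈ S \ nb i, ¬ Bd j ω)).card : ℝ) := by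
      norm_cast
      apply card_le_card
      intro ω
      simp only [mem_filter, mem_univ, true_and, mem_sdiff]
      exact fun h => ⟨h.1, fun j hj => h.2 j hj.1⟩
    have hC : ((univ.filter (fun ω => ∀ j ∈ S \ nb i, ¬ Bd j ω)).card : ℝ) ≤
        (univ.filter (fun ω => ∀ j ∈ S, ¬ Bd j ω)).card +
        ∑ j ∈ S ∩ nb i, ((univ.filter (fun ω => Bd j ω ∧ ∀ j ∈ S \ nb i, ¬ Bd j ω)).card : ℝ) := by
      norm_cast
      refine le_trans (card_le_card (t := (univ.filter (fun ω => ∀ j ∈ S, ¬ Bd j ω)) ∪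
        (S ∩ nb i).biUnion (fun j => univ.filter (fun ω => Bd j ω ∧ ∀ j ∈ S \ nb i, ¬ Bd j ω))) ?_) ?_
      · intro ω
        simp only [mem_filter, mem_univ, true_and, mem_sdiff, mem_union, mem_biUnion, mem_inter]
        intro h
        by_cases h' : ∀ j ∈ S, ¬ Bd j ω
        · exact Or.inl h'
        · push Not at h'
          obtain ⟨j, hj, hb⟩ := h'
          refine Or.inr ⟨j, ⟨hj, ?_⟩, hb, h⟩
          by_contra hn
          exact h j ⟨hj, hn⟩ hb
      · exact (card_union_le _ _).trans (Nat.add_le_add_left card_biUnion_le _)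
    have hD : ∑ j ∈ S ∩ nb i, ((univ.filter (fun ω => Bd j ω ∧ ∀ j ∈ S \ nb i, ¬ Bd j ω)).card : ℝ)
        ≤ ∑ j ∈ S ∩ nb i, 2 * p * ((univ.filter (fun ω => ∀ j ∈ S \ nb i, ¬ Bd j ω)).card : ℝ) :=
      sum_le_sum (fun j _ => ih _ hlt _ rfl j)
    rw [sum_const, nsmul_eq_mul] at hD
    have hE : ((S ∩ nb i).card : ℝ) ≤ Δ := by
      exact_mod_cast (card_le_card inter_subset_right).trans (hΔ i)
    set X : ℝ := ((univ.filter (fun ω => ∀ j ∈ S \ nb i, ¬ Bd j ω)).card : ℝ)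
    have hX : 0 ≤ X := Nat.cast_nonneg _
    set k : ℝ := ((S ∩ nb i).card : ℝ)
    have hF : k * (2 * p * X) ≤ Δ * (2 * p * X) := by gcongr
    have hG : Δ * (2 * p * X) ≤ X / 2 := by nlinarith
    have hH : X ≤ 2 * (univ.filter (fun ω => ∀ j ∈ S, ¬ Bd j ω)).card := by linarith
    nlinarith

theorem lll {Ω I : Type*} [Fintype Ω] [Nonempty Ω] (Bd : I → Ω → Prop)
    (nb : I → Finset I) (p : ℝ) (Δ : ℕ) (hp0 : 0 ≤ p)
    (hΔ : ∀ i, (nb i).card ≤ Δ) (hΔ1 : 1 ≤ Δ) (hp : 4 * p * Δ ≤ 1)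
    (hind : ∀ i (S : Finset I), (∀ j ∈ S, j ∉ nb i) →
      ((univ.filter (fun ω => Bd i ω ∧ ∀ j ∈ S, ¬ Bd j ω)).card : ℝ) ≤
        p * (univ.filter (fun ω => ∀ j ∈ S, ¬ Bd j ω)).card) (S : Finset I) :
    ∃ ω, ∀ j ∈ S, ¬ Bd j ω := by
  have h2p : 2 * p ≤ 1 / 2 := by
    have : (1:ℝ) ≤ Δ := by exact_mod_cast hΔ1
    nlinarith
  suffices h : 0 < (univ.filter (fun ω => ∀ j ∈ S, ¬ Bd j ω)).card by
    obtain ⟨ω, hω⟩ := card_pos.1 h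
    exact ⟨ω, (mem_filter.1 hω).2⟩
  induction S using Finset.induction_on with
  | empty => simpa using Fintype.card_pos
  | insert i S hi ih =>
    have h1 := lll_core Bd nb p Δ hp0 hΔ hp hind _ S rfl i
    have h2 : (univ.filter (fun ω => ∀ j ∈ S, ¬ Bd j ω)).card ≤
      (univ.filter (fun ω => ∀ j ∈ insert i S, ¬ Bd j ω)).card +
      (univ.filter (fun ω => Bd i ω ∧ ∀ j ∈ S, ¬ Bd j ω)).card := by
      refine (card_le_card ?_).trans (card_union_le _ _)
      intro ω
      simp only [mem_filter, mem_univ, true_and, mem_union, mem_insert, forall_eq_or_imp]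
      tauto
    have h3 : ((univ.filter (fun ω => ∀ j ∈ S, ¬ Bd j ω)).card : ℝ) ≤
      (univ.filter (fun ω => ∀ j ∈ insert i S, ¬ Bd j ω)).card +
      (univ.filter (fun ω => Bd i ω ∧ ∀ j ∈ S, ¬ Bd j ω)).card := by exact_mod_cast h2
    have h4 : (0:ℝ) < (univ.filter (fun ω => ∀ j ∈ S, ¬ Bd j ω)).card := by exact_mod_cast ih
    have : (0:ℝ) < (univ.filter (fun ω => ∀ j ∈ insert i S, ¬ Bd j ω)).card := by nlinarith
    exact_mod_cast this

theorem indep_count {V C : Type*} [Fintype V] [Fintype C] (X : Finset V)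
    (P Q : (V → C) → Prop)
    (hP : ∀ f g : V → C, (∀ v ∈ X, f v = g v) → P f → P g)
    (hQ : ∀ f g : V → C, (∀ v, v ∉ X → f v = g v) → Q f → Q g) :
    (univ.filter (fun f => P f ∧ Q f)).card * Fintype.card (V → C) ≤
      (univ.filter P).card * (univ.filter Q).card := by
  rw [← card_univ, ← card_product, ← card_product]
  apply card_le_card_of_injOn (fun q => (X.piecewise q.1 q.2, X.piecewise q.2 q.1))
  · rintro ⟨f, g⟩ h
    simp only [coe_product, Set.mem_prod, mem_coe, mem_filter, mem_univ, true_and, and_true] at h ⊢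
    refine ⟨hP f _ (fun v hv => ?_) h.1, hQ f _ (fun v hv => ?_) h.2⟩ <;> simp [hv]
  · rintro ⟨f, g⟩ _ ⟨f', g'⟩ _ h
    simp only [Prod.mk.injEq] at h ⊢
    constructor <;> ext v
    · by_cases hv : v ∈ X
      · simpa [hv] using congrFun h.1 v
      · simpa [hv] using congrFun h.2 v
    · by_cases hv : v ∈ X
      · simpa [hv] using congrFun h.2 v
      · simpa [hv] using congrFun h.1 v

theorem avoid_count {V C : Type*} [Fintype V] [Fintype C] [Nonempty C] (K : Finset V) (U : Finset C) :
    ((univ.filter (fun f : V → C => ∀ c ∈ U, ∀ a ∈ K, f a ≠ c)).card : ℝ) ≤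
      (Fintype.card C : ℝ) ^ (Fintype.card V) *
        (Real.exp (-((K.card : ℝ) / Fintype.card C))) ^ U.card := by
  have hN : (0:ℝ) < Fintype.card C := by exact_mod_cast Fintype.card_pos
  have h1 : univ.filter (fun f : V → C => ∀ c ∈ U, ∀ a ∈ K, f a ≠ c) =
      Fintype.piFinset (fun v => if v ∈ K then Uᶜ else univ) := by
    ext f
    simp only [mem_filter, mem_univ, true_and, Fintype.mem_piFinset]
    constructor
    · intro h v
      split_ifs with hv
      · rw [mem_compl]; exact fun hc => h _ hc v hv rfl
      · simp
    · intro h c hc a ha e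
      have := h a
      rw [if_pos ha, mem_compl, e] at this
      exact this hc
  rw [h1, Fintype.card_piFinset]
  push_cast
  have h2 : ∀ v : V, (((if v ∈ K then Uᶜ else univ : Finset C)).card : ℝ) ≤
      Fintype.card C * (if v ∈ K then Real.exp (-((U.card : ℝ) / Fintype.card C)) else 1) := by
    intro v
    split_ifs
    · rw [card_compl, Nat.cast_sub (card_le_univ _)]
      have := Real.add_one_le_exp (-((U.card : ℝ) / Fintype.card C))
      calc (Fintype.card C : ℝ) - U.card = Fintype.card C * (-((U.card : ℝ) / Fintype.card C) + 1) := by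
            field_simp; ring
        _ ≤ _ := by gcongr
    · simp [card_univ]
  refine (prod_le_prod (fun _ _ => Nat.cast_nonneg _) (fun v _ => h2 v)).trans (le_of_eq ?_)
  rw [prod_mul_distrib, prod_const, card_univ, prod_ite_mem, univ_inter, prod_const,
    ← Real.exp_nat_mul, ← Real.exp_nat_mul]
  congr 2
  ring

theorem hit_moment {V C : Type*} [Fintype V] [Fintype C] [Nonempty C] (K : Finset V) (D : Finset C)
    (z : ℝ) (hz0 : 0 ≤ z) (hz1 : z ≤ 1) :
    ∑ f : V → C, ∏ c ∈ D, (z + if ∀ a ∈ K, f a ≠ c then (1 - z) else 0) ≤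
      (Fintype.card C : ℝ) ^ (Fintype.card V) *
        (z + (1 - z) * Real.exp (-((K.card : ℝ) / Fintype.card C))) ^ D.card := by
  have h1 : ∀ f : V → C, ∏ c ∈ D, (z + if ∀ a ∈ K, f a ≠ c then (1 - z) else 0) =
      ∑ U ∈ D.powerset, (1 - z) ^ U.card * z ^ (D \ U).card *
        (if ∀ c ∈ U, ∀ a ∈ K, f a ≠ c then 1 else 0) := by
    intro f
    simp_rw [add_comm z]
    rw [prod_add]
    refine sum_congr rfl fun U _ => ?_
    rw [prod_const, prod_ite_zero, prod_const]
    split_ifs <;> ring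
  simp_rw [h1]
  rw [sum_comm, ← prod_const, add_comm z, prod_add, mul_sum]
  refine sum_le_sum fun U hU => ?_
  rw [← mul_sum, sum_boole, prod_const, prod_const, mul_pow]
  have := avoid_count (V := V) K U
  have hz : 0 ≤ (1 - z) ^ U.card * z ^ (D \ U).card := by
    have : 0 ≤ 1 - z := by linarith
    positivity
  calc _ ≤ (1 - z) ^ U.card * z ^ (D \ U).card * _ := mul_le_mul_of_nonneg_left this hz
    _ = _ := by ring

theorem pair_count {V C : Type*} [Fintype V] [Fintype C] [Nonempty C] (U : Finset C)
    (q : (c : C) → c ∈ U → V × V) (hq : ∀ c hc, (q c hc).1 ≠ (q c hc).2) :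
    ((univ.filter (fun f : V → C => ∀ c (hc : c ∈ U), f (q c hc).1 = c ∧ f (q c hc).2 = c)).card : ℝ) ≤
      (Fintype.card C : ℝ) ^ (Fintype.card V) * ((1 / (Fintype.card C : ℝ) ^ 2)) ^ U.card := by
  have hN : (0:ℝ) < Fintype.card C := by exact_mod_cast Fintype.card_pos
  rcases (univ.filter (fun f : V → C => ∀ c (hc : c ∈ U), f (q c hc).1 = c ∧ f (q c hc).2 = c)).eq_empty_or_nonempty with h | ⟨g, hg⟩
  · rw [h]; simp; positivity
  · simp only [mem_filter, mem_univ, true_and] at hg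
    set P : Finset V := (univ.image (fun c : U => (q c.1 c.2).1)) ∪ (univ.image (fun c : U => (q c.1 c.2).2)) with hP
    have hPc : P.card = 2 * U.card := by
      rw [hP, card_union_of_disjoint, card_image_of_injective, card_image_of_injective]
      · simp; ring
      · intro c c' h
        have h1 := (hg c.1 c.2).2
        have h2 := (hg c'.1 c'.2).2
        simp only at h
        rw [h, h2] at h1
        exact Subtype.ext h1.symm
      · intro c c' h
        have h1 := (hg c.1 c.2).1
        have h2 := (hg c'.1 c'.2).1
        simp only at h
        rw [h, h2] at h1
        exact Subtype.ext h1.symm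
      · rw [Finset.disjoint_left]
        intro v hv hv'
        simp only [mem_image, mem_univ, true_and] at hv hv'
        obtain ⟨c, rfl⟩ := hv
        obtain ⟨c', hc'⟩ := hv'
        have h1 := (hg c.1 c.2).1
        have h2 := (hg c'.1 c'.2).2
        rw [hc', h1] at h2
        have : c = c' := Subtype.ext h2
        subst this
        exact hq _ _ hc'.symm
    have h1 : univ.filter (fun f : V → C => ∀ c (hc : c ∈ U), f (q c hc).1 = c ∧ f (q c hc).2 = c) ⊆
      Fintype.piFinset (fun v => if v ∈ P then {g v} else univ) := by
      intro f hf
      simp only [mem_filter, mem_univ, true_and, Fintype.mem_piFinset] at hf ⊢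
      intro v
      split_ifs with hv
      · rw [hP, mem_union, mem_image, mem_image] at hv
        rw [mem_singleton]
        rcases hv with ⟨c, _, rfl⟩ | ⟨c, _, rfl⟩
        · rw [(hf _ _).1, (hg _ _).1]
        · rw [(hf _ _).2, (hg _ _).2]
      · simp
    have h2 : ((Fintype.piFinset (fun v => if v ∈ P then {g v} else univ)).card : ℝ) =
        (Fintype.card C : ℝ) ^ (Fintype.card V) * ((1 / (Fintype.card C : ℝ) ^ 2)) ^ U.card := by
      rw [Fintype.card_piFinset]
      push_cast
      have : ∀ v : V, (((if v ∈ P then {g v} else univ : Finset C)).card : ℝ) =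
        Fintype.card C * (if v ∈ P then 1 / (Fintype.card C : ℝ) else 1) := by
        intro v
        split_ifs
        · simp
        · simp
      simp_rw [this]
      rw [prod_mul_distrib, prod_const, card_univ, prod_ite_mem, univ_inter, prod_const, hPc, pow_mul]
      congr 2
      ring
    rw [← h2]
    exact_mod_cast card_le_card h1

theorem pair_moment {V C : Type*} [Fintype V] [Fintype C] [Nonempty C] (D : Finset C)
    (w : V × V → ℝ) (hw : ∀ q, 0 ≤ w q) (hw0 : ∀ v, w (v, v) = 0) :
    ∑ f : V → C, ∏ c ∈ D, (1 + ∑ q, if f q.1 = c ∧ f q.2 = c then w q else 0) ≤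
      (Fintype.card C : ℝ) ^ (Fintype.card V) *
        (1 + (∑ q, w q) * (1 / (Fintype.card C : ℝ) ^ 2)) ^ D.card := by
  have hN : (0:ℝ) < Fintype.card C := by exact_mod_cast Fintype.card_pos
  simp_rw [add_comm (1:ℝ)]
  rw [← prod_const, prod_add]
  simp_rw [prod_add]
  rw [sum_comm, mul_sum]
  refine sum_le_sum fun U hU => ?_
  simp only [prod_const_one, mul_one]
  rw [prod_const, mul_pow, ← prod_const (∑ q, w q)]
  simp_rw [prod_sum]
  rw [sum_comm, sum_mul, mul_sum]
  refine sum_le_sum fun q _ => ?_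
  have h0 : 0 ≤ ∏ x ∈ U.attach, w (q x.1 x.2) := prod_nonneg fun _ _ => hw _
  by_cases hq : ∀ c hc, (q c hc).1 ≠ (q c hc).2
  · have h1 := pair_count U q hq
    have h2 : ∀ f : V → C, (∏ x ∈ U.attach, if f (q x.1 x.2).1 = x.1 ∧ f (q x.1 x.2).2 = x.1 then w (q x.1 x.2) else 0) =
      (∏ x ∈ U.attach, w (q x.1 x.2)) * (if ∀ c (hc : c ∈ U), f (q c hc).1 = c ∧ f (q c hc).2 = c then 1 else 0) := by
      intro f
      rw [prod_ite_zero]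
      simp
    simp_rw [h2]
    rw [← mul_sum, sum_boole]
    calc _ ≤ (∏ x ∈ U.attach, w (q x.1 x.2)) * _ := mul_le_mul_of_nonneg_left h1 h0
      _ = _ := by ring
  · push Not at hq
    obtain ⟨c, hc, hcc⟩ := hq
    have hz : w (q c hc) = 0 := by
      have : q c hc = ((q c hc).1, (q c hc).1) := by rw [Prod.ext_iff]; exact ⟨rfl, hcc.symm⟩
      rw [this]; exact hw0 _
    have : ∀ f : V → C, (∏ x ∈ U.attach, if f (q x.1 x.2).1 = x.1 ∧ f (q x.1 x.2).2 = x.1 then w (q x.1 x.2) else 0) = 0 := by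
      intro f
      refine prod_eq_zero (mem_attach U ⟨c, hc⟩) ?_
      simp [hz]
    simp_rw [this]
    simp only [sum_const_zero]
    positivity

theorem local_opt {V C : Type*} [Fintype V] [Fintype C] (w : V → V → ℕ)
    (hs : ∀ a b, w a b = w b a) (W : Finset V) (f0 : V → C) :
    ∃ f : V → C, (∀ a ∉ W, f a = f0 a) ∧ ∀ a ∈ W,
      Fintype.card C * (∑ x ∈ univ.erase a, if f x = f a then w a x else 0) ≤ ∑ x ∈ univ.erase a, w a x := by
  let Φ : (V → C) → ℕ := fun f => ∑ a, ∑ x, if a ≠ x ∧ f a = f x then w a x else 0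
  obtain ⟨f, hf, hmin⟩ := exists_min_image (univ.filter (fun f : V → C => ∀ a ∉ W, f a = f0 a)) Φ ⟨f0, by simp⟩
  simp only [mem_filter, mem_univ, true_and] at hf hmin
  refine ⟨f, hf, fun v hv => ?_⟩
  have key : ∀ g : V → C, Φ g = 2 * (∑ x ∈ univ.erase v, if g x = g v then w v x else 0) +
      ∑ a ∈ univ.erase v, ∑ x ∈ univ.erase v, if a ≠ x ∧ g a = g x then w a x else 0 := by
    intro g
    have e1 : ∀ a, (∑ x, if a ≠ x ∧ g a = g x then w a x else 0) =
      (if a ≠ v ∧ g a = g v then w a v else 0) + ∑ x ∈ univ.erase v, if a ≠ x ∧ g a = g x then w a x else 0 :=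
      fun a => (add_sum_erase univ _ (mem_univ v)).symm
    have e2 : Φ g = (∑ x, if v ≠ x ∧ g v = g x then w v x else 0) +
      ∑ a ∈ univ.erase v, ∑ x, if a ≠ x ∧ g a = g x then w a x else 0 :=
      (add_sum_erase univ (fun a => ∑ x, if a ≠ x ∧ g a = g x then w a x else 0) (mem_univ v)).symm
    rw [e2, e1 v, sum_congr rfl (fun a _ => e1 a), sum_add_distrib]
    have e3 : (∑ x ∈ univ.erase v, if v ≠ x ∧ g v = g x then w v x else 0) =
      ∑ x ∈ univ.erase v, if g x = g v then w v x else 0 := by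
      refine sum_congr rfl fun x hx => ?_
      have : v ≠ x := fun h => (mem_erase.1 hx).1 h.symm
      simp [this, eq_comm]
    have e4 : (∑ x ∈ univ.erase v, if x ≠ v ∧ g x = g v then w x v else 0) =
      ∑ x ∈ univ.erase v, if g x = g v then w v x else 0 := by
      refine sum_congr rfl fun x hx => ?_
      have : x ≠ v := (mem_erase.1 hx).1
      simp [this, hs x v]
    rw [e3, e4]
    simp
    ring
  have step : ∀ c : C, (∑ x ∈ univ.erase v, if f x = f v then w v x else 0) ≤
      ∑ x ∈ univ.erase v, if f x = c then w v x else 0 := by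
    intro c
    have h := hmin (Function.update f v c) (fun a ha => by
      have : a ≠ v := fun h => ha (h ▸ hv)
      simp [this, hf a ha])
    rw [key, key] at h
    have e1 : (∑ x ∈ univ.erase v, if Function.update f v c x = Function.update f v c v then w v x else 0) =
        ∑ x ∈ univ.erase v, if f x = c then w v x else 0 := by
      refine sum_congr rfl fun x hx => ?_
      simp [(mem_erase.1 hx).1]
    have e2 : (∑ a ∈ univ.erase v, ∑ x ∈ univ.erase v, if a ≠ x ∧ Function.update f v c a = Function.update f v c x then w a x else 0) =
      ∑ a ∈ univ.erase v, ∑ x ∈ univ.erase v, if a ≠ x ∧ f a = f x then w a x else 0 := by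
      refine sum_congr rfl fun a ha => sum_congr rfl fun x hx => ?_
      simp [(mem_erase.1 hx).1, (mem_erase.1 ha).1]
    rw [e1, e2] at h
    omega
  have := sum_le_sum (s := univ) (fun c (_ : c ∈ univ) => step c)
  rw [sum_const, card_univ, smul_eq_mul, sum_comm] at this
  simpa using this

def codegN {V : Type*} [DecidableEq V] (N : V → Finset V) (a x : V) : ℕ := (N a ∩ N x).card

noncomputable def confN {V C : Type*} [Fintype V] (N : V → Finset V) (f : V → C) (a : V) : ℕ :=
  ∑ x ∈ univ.erase a, if f x = f a then codegN N a x else 0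

theorem codeg_sum {V : Type*} [Fintype V] (N : V → Finset V) (d : ℕ)
    (hd : ∀ v, (N v).card = d) (hs : ∀ x y, x ∈ N y → y ∈ N x) (a : V) :
    ∑ x, codegN N a x = d * d := by
  have h1 : ∀ x, codegN N a x = ∑ u ∈ N a, if x ∈ N u then 1 else 0 := by
    intro x
    rw [codegN, ← filter_mem_eq_inter, card_filter]
    refine sum_congr rfl fun u _ => ?_
    have : u ∈ N x ↔ x ∈ N u := ⟨hs _ _, hs _ _⟩
    simp [this]
  simp_rw [h1]
  rw [sum_comm]
  simp [hd]

noncomputable def hitN {V C : Type*} (N : V → Finset V) (D : Finset C) (b : V) (f : V → C) : ℕ :=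
  (D.filter (fun c => ∃ a ∈ N b, f a = c)).card

noncomputable def spoilN {V C : Type*} [Fintype V] (N : V → Finset V) (d : ℕ) (D : Finset C) (b : V) (f : V → C) : ℕ :=
  (D.filter (fun c => ∃ a ∈ N b, f a = c ∧ d < 2 * confN N f a)).card

theorem exp_aux (x : ℝ) (hx : 0 < x) : x / (1 + x) ≤ 1 - Real.exp (-x) := by
  have h := Real.add_one_le_exp x
  rw [Real.exp_neg]
  have : (Real.exp x)⁻¹ ≤ (1 + x)⁻¹ := by
    apply inv_anti₀ <;> linarith
  have e : x / (1 + x) = 1 - (1 + x)⁻¹ := by field_simp; ring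
  linarith

theorem prob_hit {V C : Type*} [Fintype V] [Fintype C] (N : V → Finset V) (d α : ℕ)
    (hd : ∀ v, (N v).card = d) (hd0 : 0 < d) (hα : 64 ≤ α) (hC : Fintype.card C = α * d)
    (D : Finset C) (b : V) :
    ((univ.filter (fun f : V → C => (hitN N D b f : ℝ) < 3 * D.card / (4 * α))).card : ℝ) ≤
      (Fintype.card C : ℝ) ^ (Fintype.card V) * Real.exp (-(D.card / (100 * α))) := by
  have hCp : 0 < Fintype.card C := by rw [hC]; positivity
  have : Nonempty C := Fintype.card_pos_iff.1 hCp
  have hαr : (64:ℝ) ≤ α := by exact_mod_cast hα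
  set z := Real.exp (-(1/8 : ℝ)) with hz
  have hz1 : z ≤ 1 := by rw [hz]; apply Real.exp_le_one_iff.2; norm_num
  have hm := hit_moment (V := V) (N b) D z (Real.exp_pos _).le hz1
  have hr : ((N b).card : ℝ) / Fintype.card C = 1 / α := by
    rw [hd, hC]; push_cast; field_simp
  rw [hr] at hm
  have hprod : ∀ f : V → C, ∏ c ∈ D, (z + if ∀ a ∈ N b, f a ≠ c then (1 - z) else 0) = z ^ hitN N D b f := by
    intro f
    rw [hitN, ← prod_const, prod_filter]
    refine prod_congr rfl fun c _ => ?_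
    by_cases h : ∃ a ∈ N b, f a = c
    · have h' : ¬ ∀ a ∈ N b, f a ≠ c := by push Not; exact h
      rw [if_pos h, if_neg h', add_zero]
    · have h' : ∀ a ∈ N b, f a ≠ c := by push Not at h; exact h
      rw [if_neg h, if_pos h']; ring
  simp_rw [hprod] at hm
  set F := univ.filter (fun f : V → C => (hitN N D b f : ℝ) < 3 * D.card / (4 * α)) with hF
  have hlow : (F.card : ℝ) * Real.exp (-(3 * D.card / (32 * α))) ≤ ∑ f : V → C, z ^ hitN N D b f := by
    rw [← nsmul_eq_mul, ← sum_const]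
    refine le_trans (sum_le_sum (g := fun f => z ^ hitN N D b f) fun f hf => ?_)
      (sum_le_sum_of_subset_of_nonneg (subset_univ F) fun _ _ _ => by positivity)
    rw [hF, mem_filter] at hf
    rw [hz, ← Real.exp_nat_mul]
    apply Real.exp_le_exp.2
    have e : (3 * D.card / (32 * α) : ℝ) = (3 * D.card / (4 * α)) / 8 := by ring
    rw [e]
    linarith [hf.2]
  have hup : (z + (1 - z) * Real.exp (-(1 / (α:ℝ)))) ^ D.card ≤ Real.exp (-(D.card / (9 * (α + 1)))) := by
    have h1 := exp_aux (1/8) (by norm_num)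
    have h2 := exp_aux (1/α) (by positivity)
    rw [← hz] at h1
    have e2 : (1 / (α:ℝ)) / (1 + 1 / α) = 1 / (α + 1) := by field_simp
    rw [e2] at h2
    have h3 : z + (1 - z) * Real.exp (-(1 / (α:ℝ))) ≤ Real.exp (-(1 / (9 * (α + 1)))) := by
      have h4 := Real.add_one_le_exp (-(1 / (9 * ((α:ℝ) + 1))))
      have h5 : (1/9 : ℝ) * (1 / (α + 1)) ≤ (1 - z) * (1 - Real.exp (-(1 / (α:ℝ)))) := by
        apply mul_le_mul _ h2 (by positivity) (by linarith)
        norm_num at h1 ⊢; linarith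
      have e5 : (1 / (9 * ((α:ℝ) + 1))) = (1/9 : ℝ) * (1 / (α + 1)) := by field_simp
      rw [e5] at h4 ⊢
      nlinarith
    have hz0 : 0 ≤ 1 - z := by linarith
    calc _ ≤ (Real.exp (-(1 / (9 * ((α:ℝ) + 1))))) ^ D.card := by
          apply pow_le_pow_left₀ _ h3
          have := Real.exp_pos (-(1/8:ℝ)); positivity
      _ = _ := by rw [← Real.exp_nat_mul]; congr 1; ring
  have hfin : (F.card : ℝ) * Real.exp (-(3 * D.card / (32 * α))) ≤
      (Fintype.card C : ℝ) ^ (Fintype.card V) * Real.exp (-(D.card / (9 * (α + 1)))) :=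
    hlow.trans (hm.trans (by gcongr))
  have hexp : Real.exp (-(D.card / (9 * ((α:ℝ) + 1)))) ≤ Real.exp (-(D.card / (100 * α))) * Real.exp (-(3 * D.card / (32 * α))) := by
    rw [← Real.exp_add]
    apply Real.exp_le_exp.2
    have hD : (0:ℝ) ≤ D.card := Nat.cast_nonneg _
    have : (1 / (100 * α) + 3 / (32 * α) : ℝ) ≤ 1 / (9 * (α + 1)) := by
      rw [div_add_div _ _ (by positivity) (by positivity), div_le_div_iff₀ (by positivity) (by positivity)]
      nlinarith
    have := mul_le_mul_of_nonneg_left this hD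
    have e : (D.card:ℝ) * (1 / (100 * α) + 3 / (32 * α)) = D.card / (100 * α) + 3 * D.card / (32 * α) := by ring
    have e' : (D.card:ℝ) * (1 / (9 * (α + 1))) = D.card / (9 * (α + 1)) := by ring
    rw [e, e'] at this
    linarith
  have := hfin.trans (mul_le_mul_of_nonneg_left hexp (by positivity))
  rw [← mul_assoc] at this
  exact le_of_mul_le_mul_right this (Real.exp_pos _)

theorem prob_spoil {V C : Type*} [Fintype V] [Fintype C] (N : V → Finset V) (d α : ℕ)
    (hd : ∀ v, (N v).card = d) (hs : ∀ x y, x ∈ N y → y ∈ N x)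
    (hd0 : 0 < d) (hα : 64 ≤ α) (hC : Fintype.card C = α * d)
    (D : Finset C) (b : V) :
    ((univ.filter (fun f : V → C => (D.card / (4 * α) : ℝ) < (spoilN N d D b f : ℝ))).card : ℝ) ≤
      (Fintype.card C : ℝ) ^ (Fintype.card V) * Real.exp (-(D.card / (100 * α))) := by
  have hCp : 0 < Fintype.card C := by rw [hC]; positivity
  have : Nonempty C := Fintype.card_pos_iff.1 hCp
  have hαr : (64:ℝ) ≤ α := by exact_mod_cast hα
  have hdr : (0:ℝ) < d := by exact_mod_cast hd0
  let w : V × V → ℝ := fun q => if q.1 ∈ N b ∧ q.1 ≠ q.2 then 2 / d * codegN N q.1 q.2 else 0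
  have hw : ∀ q, 0 ≤ w q := by
    intro q; simp only [w]; split_ifs <;> positivity
  have hm := pair_moment (V := V) D w hw (fun v => by simp [w])
  have hwsum : ∑ q, w q ≤ 2 * d ^ 2 := by
    rw [Fintype.sum_prod_type]
    calc ∑ a, ∑ x, w (a, x) ≤ ∑ a, if a ∈ N b then (2 * d : ℝ) else 0 := by
          refine sum_le_sum fun a _ => ?_
          split_ifs with ha
          · calc ∑ x, w (a, x) ≤ ∑ x, 2 / d * (codegN N a x : ℝ) := by
                  refine sum_le_sum fun x _ => ?_
                  simp only [w]; split_ifs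
                  · exact le_rfl
                  · positivity
              _ = 2 * d := by
                  rw [← mul_sum]
                  have := codeg_sum N d hd hs a
                  rw [← Nat.cast_sum, this]; push_cast; field_simp
          · simp [w, ha]
      _ = 2 * d ^ 2 := by
          simp [hd]; ring
  have hupper : (1 + (∑ q, w q) * (1 / (Fintype.card C : ℝ) ^ 2)) ^ D.card ≤ Real.exp (D.card * (2 / α ^ 2)) := by
    rw [Real.exp_nat_mul]
    have hws0 : 0 ≤ ∑ q, w q := sum_nonneg fun q _ => hw q
    apply pow_le_pow_left₀ (by positivity)
    have h1 : (∑ q, w q) * (1 / (Fintype.card C : ℝ) ^ 2) ≤ 2 / α ^ 2 := by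
      calc _ ≤ (2 * (d:ℝ) ^ 2) * (1 / (Fintype.card C : ℝ) ^ 2) := by gcongr
        _ = _ := by rw [hC]; push_cast; field_simp
    linarith [Real.add_one_le_exp (2 / (α:ℝ) ^ 2)]
  set F := univ.filter (fun f : V → C => (D.card / (4 * α) : ℝ) < (spoilN N d D b f : ℝ)) with hF
  have hlow : (F.card : ℝ) * Real.exp (0.69 * (D.card / (4 * α))) ≤
      ∑ f : V → C, ∏ c ∈ D, (1 + ∑ q, if f q.1 = c ∧ f q.2 = c then w q else 0) := by
    have hY0 : ∀ (f : V → C) c, 0 ≤ ∑ q, if f q.1 = c ∧ f q.2 = c then w q else 0 := by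
      intro f c
      refine sum_nonneg fun q _ => ?_
      split_ifs
      · exact hw q
      · exact le_rfl
    rw [← nsmul_eq_mul, ← sum_const]
    refine le_trans (sum_le_sum fun f hf => ?_)
      (sum_le_sum_of_subset_of_nonneg (subset_univ F) fun f _ _ => prod_nonneg fun c _ => by linarith [hY0 f c])
    rw [hF, mem_filter] at hf
    have h1 : (2:ℝ) ^ spoilN N d D b f ≤ ∏ c ∈ D, (1 + ∑ q, if f q.1 = c ∧ f q.2 = c then w q else 0) := by
      rw [spoilN, ← prod_const, prod_filter]
      refine prod_le_prod (fun c _ => by split_ifs <;> norm_num) fun c _ => ?_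
      split_ifs with h
      · obtain ⟨a, ha, hac, hc⟩ := h
        have h2 : (1:ℝ) ≤ ∑ x, if f a = c ∧ f x = c then w (a, x) else 0 := by
          have h3 : (∑ x, if f a = c ∧ f x = c then w (a, x) else 0) = 2 / d * (confN N f a : ℝ) := by
            rw [confN, Nat.cast_sum, mul_sum, ← add_sum_erase univ _ (mem_univ a)]
            have : w (a, a) = 0 := by simp [w]
            rw [this]
            simp only [ite_self, zero_add]
            refine sum_congr rfl fun x hx => ?_
            have hne : a ≠ x := fun h => (mem_erase.1 hx).1 h.symm
            subst hac
            by_cases hx : f x = f a <;> simp [w, ha, hne, hx]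
          rw [h3]
          have : (d:ℝ) < 2 * confN N f a := by exact_mod_cast hc
          rw [div_mul_eq_mul_div, le_div_iff₀ hdr]; linarith
        have h4 : (∑ x, if f a = c ∧ f x = c then w (a, x) else 0) ≤ ∑ q : V × V, if f q.1 = c ∧ f q.2 = c then w q else 0 := by
          rw [Fintype.sum_prod_type]
          refine single_le_sum (f := fun a => ∑ x, if f a = c ∧ f x = c then w (a, x) else 0) (fun a _ => sum_nonneg fun x _ => ?_) (mem_univ a)
          split_ifs
          · exact hw _
          · exact le_rfl
        linarith
      · linarith [hY0 f c]
    refine le_trans ?_ h1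
    have e : (2:ℝ) ^ spoilN N d D b f = Real.exp (spoilN N d D b f * Real.log 2) := by
      rw [Real.exp_nat_mul, Real.exp_log (by norm_num)]
    rw [e]
    apply Real.exp_le_exp.2
    have hl := Real.log_two_gt_d9
    have h0 : (0:ℝ) ≤ D.card / (4 * α) := by positivity
    nlinarith [hf.2]
  have hfin := hlow.trans (hm.trans (mul_le_mul_of_nonneg_left hupper (by positivity)))
  have hexp : Real.exp (D.card * (2 / (α:ℝ) ^ 2)) ≤ Real.exp (-(D.card / (100 * α))) * Real.exp (0.69 * (D.card / (4 * α))) := by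
    rw [← Real.exp_add]
    apply Real.exp_le_exp.2
    have hD : (0:ℝ) ≤ D.card / α := by positivity
    have h1 : (2:ℝ) / α ≤ 1 / 32 := by rw [div_le_div_iff₀ (by positivity) (by norm_num)]; linarith
    have e1 : D.card * (2 / (α:ℝ) ^ 2) = D.card / α * (2 / α) := by field_simp
    have e2 : (-(D.card / (100 * α)) + 0.69 * (D.card / (4 * α)) : ℝ) = D.card / α * (0.69 / 4 - 1 / 100) := by field_simp; ring
    rw [e1, e2]
    apply mul_le_mul_of_nonneg_left _ hD
    linarith
  have := hfin.trans (mul_le_mul_of_nonneg_left hexp (by positivity))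
  rw [← mul_assoc] at this
  exact le_of_mul_le_mul_right this (Real.exp_pos _)

def BadEv {V C : Type*} [Fintype V] (N : V → Finset V) (d α : ℕ) (D : C → Finset C) (b : V) (f : V → C) : Prop :=
  ∃ c, (hitN N (D c) b f : ℝ) < 3 * (D c).card / (4 * α) ∨
    ((D c).card / (4 * α) : ℝ) < (spoilN N d (D c) b f : ℝ)

theorem prob_bad {V C : Type*} [Fintype V] [Fintype C] (N : V → Finset V) (d α : ℕ)
    (hd : ∀ v, (N v).card = d) (hs : ∀ x y, x ∈ N y → y ∈ N x)
    (hd0 : 0 < d) (hα : 64 ≤ α) (hC : Fintype.card C = α * d)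
    (D : C → Finset C) (δ : ℝ) (hD : ∀ c, δ ≤ (D c).card) (b : V) :
    ((univ.filter (fun f : V → C => BadEv N d α D b f)).card : ℝ) ≤
      (Fintype.card C : ℝ) ^ (Fintype.card V) * (2 * (α * d) * Real.exp (-(δ / (100 * α)))) := by
  have h1 : univ.filter (fun f : V → C => BadEv N d α D b f) ⊆ univ.biUnion (fun c : C =>
      (univ.filter (fun f : V → C => (hitN N (D c) b f : ℝ) < 3 * (D c).card / (4 * α))) ∪
      (univ.filter (fun f : V → C => ((D c).card / (4 * α) : ℝ) < (spoilN N d (D c) b f : ℝ)))) := by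
    intro f
    simp only [mem_filter, mem_univ, true_and, mem_biUnion, mem_union]
    exact fun h => h
  have h2 : ((univ.filter (fun f : V → C => BadEv N d α D b f)).card : ℝ) ≤ ∑ c : C,
      (((univ.filter (fun f : V → C => (hitN N (D c) b f : ℝ) < 3 * (D c).card / (4 * α))).card : ℝ) +
      (univ.filter (fun f : V → C => ((D c).card / (4 * α) : ℝ) < (spoilN N d (D c) b f : ℝ))).card) := by
    have := (card_le_card h1).trans (card_biUnion_le.trans (sum_le_sum fun c _ => card_union_le _ _))
    exact_mod_cast this
  refine h2.trans ?_
  have h3 : ∀ c, Real.exp (-((D c).card / (100 * α))) ≤ Real.exp (-(δ / (100 * α))) := by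
    intro c
    apply Real.exp_le_exp.2
    have := hD c
    have : δ / (100 * α) ≤ (D c).card / (100 * α) := by gcongr
    linarith
  calc _ ≤ ∑ c : C, 2 * ((Fintype.card C : ℝ) ^ (Fintype.card V) * Real.exp (-(δ / (100 * α)))) := by
        refine sum_le_sum fun c _ => ?_
        have a1 := prob_hit N d α hd hd0 hα hC (D c) b
        have a2 := prob_spoil N d α hd hs hd0 hα hC (D c) b
        have a3 := mul_le_mul_of_nonneg_left (h3 c) (show (0:ℝ) ≤ (Fintype.card C : ℝ) ^ (Fintype.card V) by positivity)
        linarith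
    _ = _ := by
        rw [sum_const, card_univ, nsmul_eq_mul]
        nth_rw 1 [hC]
        push_cast
        ring

def nbd {V : Type*} [DecidableEq V] (N : V → Finset V) (S : Finset V) : Finset V := S.biUnion N

theorem mem_nbd {V : Type*} (N : V → Finset V) (S : Finset V) (x : V) :
    x ∈ nbd N S ↔ ∃ u ∈ S, x ∈ N u := by simp [nbd]

theorem card_nbd {V : Type*} (N : V → Finset V) (d : ℕ) (hd : ∀ v, (N v).card = d) (S : Finset V) :
    (nbd N S).card ≤ S.card * d :=
  card_biUnion_le_card_mul _ _ _ fun v _ => (hd v).le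

def Dom {V : Type*} [DecidableEq V] (N : V → Finset V) (b : V) : Finset V := nbd N (nbd N (nbd N {b}))

theorem conf_congr {V C : Type*} [Fintype V] (N : V → Finset V)
    (hs : ∀ x y, x ∈ N y → y ∈ N x) (b a : V) (ha : a ∈ N b) (f g : V → C)
    (h : ∀ v ∈ Dom N b, f v = g v) : f a = g a ∧ confN N f a = confN N g a := by
  have hD : ∀ u ∈ N a, ∀ x ∈ N u, x ∈ Dom N b := by
    intro u hu x hx
    simp only [Dom, mem_nbd, mem_singleton]
    exact ⟨u, ⟨a, ⟨b, rfl, ha⟩, hu⟩, hx⟩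
  have ha' : f a = g a := h a (hD b (hs _ _ ha) a ha)
  refine ⟨ha', sum_congr rfl fun x _ => ?_⟩
  by_cases hc : codegN N a x = 0
  · simp [hc]
  · obtain ⟨u, hu⟩ := card_pos.1 (Nat.pos_of_ne_zero hc)
    rw [mem_inter] at hu
    rw [ha', h x (hD u hu.1 x (hs _ _ hu.2))]

theorem bad_congr {V C : Type*} [Fintype V] (N : V → Finset V) (d α : ℕ) (D : C → Finset C)
    (hs : ∀ x y, x ∈ N y → y ∈ N x) (b : V) (f g : V → C)
    (h : ∀ v ∈ Dom N b, f v = g v) (hf : BadEv N d α D b f) : BadEv N d α D b g := by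
  obtain ⟨c, hc⟩ := hf
  have e1 : hitN N (D c) b f = hitN N (D c) b g := by
    unfold hitN
    congr 1
    refine filter_congr fun c' _ => exists_congr fun a => and_congr_right fun ha => ?_
    rw [(conf_congr N hs b a ha f g h).1]
  have e2 : spoilN N d (D c) b f = spoilN N d (D c) b g := by
    unfold spoilN
    congr 1
    refine filter_congr fun c' _ => exists_congr fun a => and_congr_right fun ha => ?_
    rw [(conf_congr N hs b a ha f g h).1, (conf_congr N hs b a ha f g h).2]
  rw [e1, e2] at hc
  exact ⟨c, hc⟩

theorem exists_good {V C : Type*} [Fintype V] [Fintype C] (N : V → Finset V) (d α : ℕ)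
    (hd : ∀ v, (N v).card = d) (hs : ∀ x y, x ∈ N y → y ∈ N x)
    (hd0 : 0 < d) (hα : 64 ≤ α) (hC : Fintype.card C = α * d)
    (D : C → Finset C) (δ : ℝ) (hD : ∀ c, δ ≤ (D c).card)
    (hbig : 8 * α * (d:ℝ) ^ 7 * Real.exp (-(δ / (100 * α))) ≤ 1) :
    ∃ f : V → C, ∀ b, ¬ BadEv N d α D b f := by
  have hCp : 0 < Fintype.card C := by rw [hC]; positivity
  have : Nonempty C := Fintype.card_pos_iff.1 hCp
  have hdr : (0:ℝ) < d := by exact_mod_cast hd0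
  obtain ⟨f, hf⟩ := lll (Ω := V → C) (BadEv N d α D)
    (fun b => nbd N (nbd N (nbd N (Dom N b)))) (2 * (α * d) * Real.exp (-(δ / (100 * α)))) (d ^ 6)
    (by positivity)
    (by
      intro b
      have h := fun S => card_nbd N d hd S
      have h1 := h {b}
      have h2 := h (nbd N {b})
      have h3 := h (nbd N (nbd N {b}))
      have h4 := h (Dom N b)
      have h5 := h (nbd N (Dom N b))
      have h6 := h (nbd N (nbd N (Dom N b)))
      rw [card_singleton] at h1
      calc _ ≤ _ := h6
        _ ≤ ((((1 * d) * d) * d) * d * d) * d := by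
          refine Nat.mul_le_mul_right _ (h5.trans (Nat.mul_le_mul_right _ (h4.trans (Nat.mul_le_mul_right _ ?_))))
          exact h3.trans (Nat.mul_le_mul_right _ (h2.trans (Nat.mul_le_mul_right _ h1)))
        _ = d ^ 6 := by ring)
    (Nat.one_le_pow _ _ hd0)
    (by
      push_cast
      calc _ = 8 * α * (d:ℝ) ^ 7 * Real.exp (-(δ / (100 * α))) := by ring
        _ ≤ 1 := hbig)
    (by
      intro b S hS
      have hI := indep_count (Dom N b) (fun f : V → C => BadEv N d α D b f)
        (fun f => ∀ j ∈ S, ¬ BadEv N d α D j f)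
        (fun f g h => bad_congr N d α D hs b f g h)
        (by
          intro f g h hf j hj hb
          refine hf j hj (bad_congr N d α D hs j g f (fun v hv => (h v fun hv' => hS j hj ?_).symm) hb)
          simp only [Dom, mem_nbd, mem_singleton] at hv
          obtain ⟨u, ⟨a, ⟨j', rfl, ha⟩, hu⟩, hv⟩ := hv
          rw [mem_nbd]
          refine ⟨a, ?_, hs _ _ ha⟩
          rw [mem_nbd]
          refine ⟨u, ?_, hs _ _ hu⟩
          rw [mem_nbd]
          exact ⟨v, hv', hs _ _ hv⟩)
      have hP := prob_bad N d α hd hs hd0 hα hC D δ hD b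
      have hI' : ((univ.filter (fun f : V → C => BadEv N d α D b f ∧ ∀ j ∈ S, ¬ BadEv N d α D j f)).card : ℝ) *
          (Fintype.card C : ℝ) ^ (Fintype.card V) ≤ (univ.filter (fun f : V → C => BadEv N d α D b f)).card *
          (univ.filter (fun f : V → C => ∀ j ∈ S, ¬ BadEv N d α D j f)).card := by
        rw [Fintype.card_fun] at hI
        norm_cast
        convert hI
      have hCr : (0:ℝ) < (Fintype.card C : ℝ) ^ (Fintype.card V) := by positivity
      have := hI'.trans (mul_le_mul_of_nonneg_right hP (Nat.cast_nonneg _))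
      refine le_of_mul_le_mul_right (le_trans (le_of_eq ?_) (this.trans (le_of_eq ?_))) hCr
      · congr!
      · rw [mul_assoc, mul_comm]
        congr!)
    univ
  exact ⟨f, fun b => hf b (mem_univ b)⟩

theorem construct {V C : Type*} [Fintype V] [Fintype C] (N : V → Finset V) (d α : ℕ)
    (hd : ∀ v, (N v).card = d) (hs : ∀ x y, x ∈ N y → y ∈ N x)
    (hd0 : 0 < d) (hα : 64 ≤ α) (hC : Fintype.card C = α * d)
    (D : C → Finset C) (f0 : V → C) (h0 : ∀ b, ¬ BadEv N d α D b f0) :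
    ∃ (f : V → C) (keep : V → V → Prop),
      (∀ a, d ≤ 2 * ((N a).filter (fun b => keep a b)).card) ∧
      (∀ b a a', keep a b → keep a' b → f a = f a' → a = a') ∧
      ∀ b c, ((D c).card / (2 * α) : ℝ) ≤ ((N b).filter (fun a => keep a b ∧ f a ∈ D c)).card := by
  set W : Finset V := univ.filter (fun a => d < 2 * confN N f0 a) with hW
  obtain ⟨f, hf, hfW⟩ := local_opt (codegN N) (fun a b => by simp [codegN, inter_comm]) W f0
  have hrep : ∀ (b : V) (c : C), ∃ r : Option V,
      ((∃ a ∈ N b, a ∉ W ∧ f a = c) → ∃ v, r = some v ∧ v ∈ N b ∧ v ∉ W ∧ f v = c) ∧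
      ((∃ a ∈ N b, f a = c) → ∃ v, r = some v ∧ v ∈ N b ∧ f v = c) := by
    intro b c
    by_cases h1 : ∃ a ∈ N b, a ∉ W ∧ f a = c
    · obtain ⟨a, ha, haW, hac⟩ := h1
      exact ⟨some a, fun _ => ⟨a, rfl, ha, haW, hac⟩, fun _ => ⟨a, rfl, ha, hac⟩⟩
    · by_cases h2 : ∃ a ∈ N b, f a = c
      · obtain ⟨a, ha, hac⟩ := h2
        exact ⟨some a, fun h => absurd h h1, fun _ => ⟨a, rfl, ha, hac⟩⟩
      · exact ⟨none, fun h => absurd h h1, fun h => absurd h h2⟩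
  choose rep hr1 hr2 using hrep
  obtain ⟨keep, hkeep⟩ : ∃ keep : V → V → Prop, ∀ a b, keep a b ↔ rep b (f a) = some a :=
    ⟨fun a b => rep b (f a) = some a, fun _ _ => Iff.rfl⟩
  refine ⟨f, keep, ?_, ?_, ?_⟩
  · intro a
    have hsplit := card_filter_add_card_filter_not (s := N a) (fun b => keep a b)
    rw [hd] at hsplit
    suffices hn : 2 * ((N a).filter (fun b => ¬ keep a b)).card ≤ d by omega
    by_cases haW : a ∈ W
    · have h1 : ((N a).filter (fun b => ¬ keep a b)) ⊆
          ((univ.erase a).filter (fun r => f r = f a)).biUnion (fun r => N a ∩ N r) := by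
        intro b hb
        rw [mem_filter] at hb
        obtain ⟨r, hr, hrb, hrf⟩ := hr2 b (f a) ⟨a, hs _ _ hb.1, rfl⟩
        rw [mem_biUnion]
        refine ⟨r, ?_, mem_inter.2 ⟨hb.1, hs _ _ hrb⟩⟩
        rw [mem_filter, mem_erase]
        refine ⟨⟨?_, mem_univ _⟩, hrf⟩
        rintro rfl
        exact hb.2 ((hkeep _ _).2 hr)
      have h2 := (card_le_card h1).trans card_biUnion_le
      rw [sum_filter] at h2
      have h3 := hfW a haW
      have h4 : ∑ x ∈ univ.erase a, codegN N a x ≤ d * d := by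
        rw [← codeg_sum N d hd hs a]
        exact sum_le_sum_of_subset (subset_univ _)
      rw [hC] at h3
      have h5 : α * d * ((N a).filter (fun b => ¬ keep a b)).card ≤ d * d :=
        (Nat.mul_le_mul_left _ h2).trans (h3.trans h4)
      have h6 : α * ((N a).filter (fun b => ¬ keep a b)).card ≤ d := by
        apply Nat.le_of_mul_le_mul_left _ hd0
        calc _ = α * d * ((N a).filter (fun b => ¬ keep a b)).card := by ring
          _ ≤ _ := h5
      exact (Nat.mul_le_mul_right _ (by omega)).trans h6
    · have h1 : ((N a).filter (fun b => ¬ keep a b)) ⊆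
          ((univ.erase a).filter (fun r => f0 r = f0 a)).biUnion (fun r => N a ∩ N r) := by
        intro b hb
        rw [mem_filter] at hb
        obtain ⟨r, hr, hrb, hrW, hrf⟩ := hr1 b (f a) ⟨a, hs _ _ hb.1, haW, rfl⟩
        rw [mem_biUnion]
        refine ⟨r, ?_, mem_inter.2 ⟨hb.1, hs _ _ hrb⟩⟩
        rw [mem_filter, mem_erase]
        rw [hf r hrW, hf a haW] at hrf
        refine ⟨⟨?_, mem_univ _⟩, hrf⟩
        rintro rfl
        exact hb.2 ((hkeep _ _).2 hr)
      have h2 := (card_le_card h1).trans card_biUnion_le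
      rw [sum_filter] at h2
      have h3 : 2 * confN N f0 a ≤ d := by
        rw [hW, mem_filter] at haW
        have := not_and.1 haW (mem_univ a)
        omega
      exact (Nat.mul_le_mul_left 2 h2).trans h3
  · intro b a a' h h' hff
    rw [hkeep] at h h'
    rw [hff, h'] at h
    exact (Option.some.inj h).symm
  · intro b c
    have hb := h0 b
    unfold BadEv at hb
    push Not at hb
    obtain ⟨hb1, hb2⟩ := hb c
    have h1 : ((D c).filter (fun c => ∃ a ∈ N b, f0 a = c)) \
        ((D c).filter (fun c => ∃ a ∈ N b, f0 a = c ∧ d < 2 * confN N f0 a)) ⊆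
        ((N b).filter (fun a => keep a b ∧ f a ∈ D c)).image f := by
      intro c' hc'
      rw [mem_sdiff, mem_filter, mem_filter] at hc'
      obtain ⟨⟨hcD, a, ha, hac⟩, hn⟩ := hc'
      have haW : a ∉ W := by
        intro haW
        rw [hW, mem_filter] at haW
        exact hn ⟨hcD, a, ha, hac, haW.2⟩
      obtain ⟨r, hr, hrb, hrW, hrf⟩ := hr1 b c' ⟨a, ha, haW, by rw [hf a haW, hac]⟩
      rw [mem_image]
      refine ⟨r, mem_filter.2 ⟨hrb, ?_, ?_⟩, hrf⟩
      · rw [hkeep, hrf, hr]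
      · rw [hrf]; exact hcD
    have h2 := (card_le_card h1).trans card_image_le
    have h3 := (le_card_sdiff _ _).trans h2
    have h4 : hitN N (D c) b f0 ≤ ((N b).filter (fun a => keep a b ∧ f a ∈ D c)).card + spoilN N d (D c) b f0 := by
      unfold hitN spoilN
      omega
    have h5 : (hitN N (D c) b f0 : ℝ) ≤ ((N b).filter (fun a => keep a b ∧ f a ∈ D c)).card + spoilN N d (D c) b f0 := by
      exact_mod_cast h4
    have e : ((D c).card / (2 * α) : ℝ) = 3 * (D c).card / (4 * α) - (D c).card / (4 * α) := by
      field_simp; ring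
    rw [e]
    linarith

theorem asymp (ε : ℝ) (hε : 0 < ε) (α : ℕ) (hα : 0 < α) :
    ∃ d₀ : ℕ, ∀ d : ℕ, d₀ ≤ d → 8 * α * (d:ℝ) ^ 7 * Real.exp (-((d:ℝ) ^ ε / (100 * α))) ≤ 1 := by
  have hαr : (0:ℝ) < α := by exact_mod_cast hα
  have h1 := tendsto_rpow_mul_exp_neg_mul_atTop_nhds_zero (7 / ε) (1 / (100 * α)) (by positivity)
  have h2 := (tendsto_rpow_atTop hε).comp (tendsto_natCast_atTop_atTop (R := ℝ))
  have h3 := h1.comp h2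
  have h4 := (h3.const_mul (8 * (α:ℝ)))
  rw [mul_zero] at h4
  have h5 := h4.eventually (gt_mem_nhds (show (0:ℝ) < 1 by norm_num))
  obtain ⟨d₀, hd⟩ := Filter.eventually_atTop.1 h5
  refine ⟨d₀, fun d hdd => ?_⟩
  have := (hd d hdd).le
  simp only [Function.comp] at this
  rw [← Real.rpow_mul (Nat.cast_nonneg d)] at this
  have e : ε * (7 / ε) = ((7:ℕ):ℝ) := by field_simp; norm_num
  rw [e, Real.rpow_natCast] at this
  refine le_trans (le_of_eq ?_) this
  rw [mul_assoc]
  congr 3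
  ring

end helpers

theorem statement3 (ε : ℝ) (hε : 0 < ε) :
    ∃ α₀ : ℕ, 1 ≤ α₀ ∧
      ∀ α : ℕ, α₀ ≤ α →
        ∃ d₀ : ℕ, ∀ d : ℕ, d₀ ≤ d →
          ∀ (V : Type) [Fintype V] (G : SimpleGraph V) (A B : Set V),
            Disjoint A B → A ∪ B = Set.univ →
            (∀ u v : V, G.Adj u v → (u ∈ A ∧ v ∈ B) ∨ (u ∈ B ∧ v ∈ A)) →
            RegularDeg G d →
            ∀ 𝒢 : SimpleGraph (Fin (α * d)),
              (d : ℝ) ^ ε < (minDeg 𝒢 : ℝ) →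
              ∃ (χ : V → Fin (α * d)) (H : SimpleGraph V), H ≤ G ∧
                (∀ a ∈ A, (d : ℝ) / 2 ≤ (deg H a : ℝ)) ∧
                (∀ b ∈ B, Set.InjOn χ (H.neighborSet b)) ∧
                (∀ b ∈ B, ∀ c : Fin (α * d),
                  (minDeg 𝒢 : ℝ) / (2 * (α : ℝ)) ≤
                    (Set.ncard {a | a ∈ H.neighborSet b ∧ 𝒢.Adj (χ a) c} : ℝ)) := by
  classical
  refine ⟨64, by norm_num, fun α hα => ?_⟩
  obtain ⟨d₀, hd₀⟩ := asymp ε hε α (by omega)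
  refine ⟨max d₀ 1, fun d hd V _ G A B hAB hU hbip hreg 𝒢 hδ => ?_⟩
  have hd0 : 0 < d := lt_of_lt_of_le one_pos ((le_max_right _ _).trans hd)
  have hN : ∀ v, (G.neighborFinset v).card = d := by
    intro v
    rw [← hreg v, deg, Set.ncard_eq_toFinset_card']
    rfl
  have hs : ∀ x y, x ∈ G.neighborFinset y → y ∈ G.neighborFinset x := by
    intro x y h
    rw [mem_neighborFinset] at h ⊢
    exact h.symm
  have hC : Fintype.card (Fin (α * d)) = α * d := Fintype.card_fin _
  have hD : ∀ c, (minDeg 𝒢 : ℝ) ≤ ((𝒢.neighborFinset c).card : ℝ) := by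
    intro c
    have h1 : minDeg 𝒢 ≤ deg 𝒢 c := ciInf_le (OrderBot.bddBelow _) c
    rw [deg, Set.ncard_eq_toFinset_card'] at h1
    exact_mod_cast h1
  obtain ⟨f0, hf0⟩ := exists_good (fun v => G.neighborFinset v) d α hN hs hd0 hα hC
    (fun c => 𝒢.neighborFinset c) ((d:ℝ) ^ ε) (fun c => hδ.le.trans (hD c))
    (hd₀ d ((le_max_left _ _).trans hd))
  obtain ⟨f, keep, h1, h2, h3⟩ := construct (fun v => G.neighborFinset v) d α hN hs hd0 hα hC
    (fun c => 𝒢.neighborFinset c) f0 hf0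
  let H : SimpleGraph V :=
    { Adj := fun u v => G.Adj u v ∧ ((u ∈ A ∧ keep u v) ∨ (v ∈ A ∧ keep v u))
      symm := ⟨fun u v h => ⟨h.1.symm, h.2.symm⟩⟩
      loopless := ⟨fun u h => G.irrefl h.1⟩ }
  have hHa : ∀ a ∈ A, ∀ b, H.Adj a b ↔ G.Adj a b ∧ keep a b := by
    intro a ha b
    constructor
    · rintro ⟨hg, h | h⟩
      · exact ⟨hg, h.2⟩
      · exfalso
        rcases hbip a b hg with h' | h'
        · exact Set.disjoint_left.1 hAB h.1 h'.2
        · exact Set.disjoint_left.1 hAB ha h'.1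
    · exact fun h => ⟨h.1, Or.inl ⟨ha, h.2⟩⟩
  have hHb : ∀ b ∈ B, ∀ a, H.Adj b a ↔ G.Adj b a ∧ keep a b := by
    intro b hb a
    constructor
    · intro h
      rcases hbip b a h.1 with h' | h'
      · exact absurd hb (Set.disjoint_left.1 hAB h'.1)
      · have := (hHa a h'.2 b).1 h.symm
        exact ⟨this.1.symm, this.2⟩
    · rintro ⟨hg, hk⟩
      rcases hbip b a hg with h' | h'
      · exact absurd hb (Set.disjoint_left.1 hAB h'.1)
      · exact ((hHa a h'.2 b).2 ⟨hg.symm, hk⟩).symm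
  refine ⟨f, H, fun u v h => h.1, ?_, ?_, ?_⟩
  · intro a ha
    have e : H.neighborSet a = ((G.neighborFinset a).filter (fun b => keep a b) : Finset V) := by
      ext b
      simp [hHa a ha b]
    rw [deg, e, Set.ncard_coe_finset]
    have := h1 a
    have h' : (d:ℝ) ≤ 2 * (((G.neighborFinset a).filter (fun b => keep a b)).card : ℝ) := by
      exact_mod_cast this
    linarith
  · intro b hb a ha a' ha' hff
    exact h2 b a a' ((hHb b hb a).1 ha).2 ((hHb b hb a').1 ha').2 hff
  · intro b hb c
    have e : {a | a ∈ H.neighborSet b ∧ 𝒢.Adj (f a) c} =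
        ((G.neighborFinset b).filter (fun a => keep a b ∧ f a ∈ 𝒢.neighborFinset c) : Finset V) := by
      ext a
      simp [hHb b hb a, 𝒢.adj_comm (f a) c, and_assoc]
    rw [e, Set.ncard_coe_finset]
    have h4 := hD c
    have h5 : (minDeg 𝒢 : ℝ) / (2 * (α : ℝ)) ≤ ((𝒢.neighborFinset c).card : ℝ) / (2 * (α : ℝ)) := by
      gcongr
    refine h5.trans ((h3 b c).trans (le_of_eq ?_))
    congr!
end
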